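/- arXiv:2604.06122 — 3 statements merged into one kernel-verified Lean document; each statement's English description precedes it below -/
import Mathlib

section
/- Assume Assumption 1 holds and fix m ∈ (−1,1) and a deterministic c ∈ (0,γ). Let ã ∈ (0,ς) and λ̃ > 0 be the (unique) solutions of G*(ã) = c and G'(λ̃) = ã. Let (C_n)_{n∈ℕ} be a sequence of h-measurable random variables such that C_n(h) ∈ (0, Γ_n(h)) eventually P_h-almost surely and C_n(h)/n → c P_h-almost surely. Then there exists a sequence of h-measurable random variables (A_n)_{n∈ℕ} such that, P_h-almost surely, the measure kernels K_n(h,·) defined by K_n(h,U) = e^{C_n(h)} P_σ({σ : H_n(h,σ) − A_n(h) ∈ U}) for Borel sets U converge vaguely to the deterministic measure D_λ̃(dx) = e^{−λ̃x}dx; that is, P_h-almost surely, for every continuous compactly supported f : ℝ → ℝ, ∫_ℝ f(x) K_n(h,dx) → ∫_ℝ f(x) e^{−λ̃x} dx. -/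
open MeasureTheory ProbabilityTheory Real Filter Set
open scoped ENNReal Topology BigOperators

noncomputable section

/-- Assumption 1 of the paper, phrased for the law `μ` of `h₁`. -/
structure Assumption1 (μ : Measure ℝ) : Prop where
  isProb : IsProbabilityMeasure μ
  acPart : ¬ μ.MutuallySingular (volume : Measure ℝ)
  smallBall : ∃ ε > (0:ℝ), ∃ p₁ > (0:ℝ), ∀ t ∈ Set.Ico (0:ℝ) ε,
    (μ {x : ℝ | |x| < t}).toReal ≤ p₁ * t
  densityLB : ∃ c d p₂ : ℝ, c < d ∧ 0 < p₂ ∧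
    ∀ s : Set ℝ, s ⊆ Set.Icc c d → MeasurableSet s →
      ENNReal.ofReal p₂ * volume s ≤ μ s
  intAbs : Integrable (fun x : ℝ => |x|) μ
  intSq : Integrable (fun x : ℝ => x ^ 2) μ
  intCube : Integrable (fun x : ℝ => |x| ^ 3) μ

/-- `g(λ) = log(((1+m)/2)e^{λ(1−m)} + ((1−m)/2)e^{−λ(1+m)})`. -/
def gfun (m lam : ℝ) : ℝ :=
  Real.log ((1 + m) / 2 * Real.exp (lam * (1 - m)) + (1 - m) / 2 * Real.exp (-(lam * (1 + m))))

/-- `G(λ) = E[g(λ h₁)]`. -/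
def Gf (μ : Measure ℝ) (m lam : ℝ) : ℝ := ∫ x, gfun m (lam * x) ∂μ

/-- `G*(a) = sup_{λ∈ℝ}(λa − G(λ))`. -/
def Gstar (μ : Measure ℝ) (m a : ℝ) : ℝ := ⨆ lam : ℝ, (lam * a - Gf μ m lam)

/-- `ς = −m ψ₁ + ψ₃`. -/
def sigmaBar (μ : Measure ℝ) (m : ℝ) : ℝ := -m * ∫ x, x ∂μ + ∫ x, |x| ∂μ

/-- `γ = −E[log(1 + sign(h₁)m)] + log 2`. -/
def gammaBar (μ : Measure ℝ) (m : ℝ) : ℝ :=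
  -(∫ x, Real.log (1 + Real.sign x * m) ∂μ) + Real.log 2

/-- `Γ_n(h) = −Σ_{i=1}^n log(1 + sign(h_i) m) + n log 2`. -/
def GammaN (m : ℝ) (n : ℕ) (hs : ℕ → ℝ) : ℝ :=
  -(∑ i ∈ Finset.range n, Real.log (1 + Real.sign (hs i) * m)) + n * Real.log 2

/-- The spin value attached to a Boolean: `true ↦ 1`, `false ↦ -1`. -/
def spin (b : Bool) : ℝ := if b then 1 else -1

/-- `H_n(h,τ) = Σ_{i=1}^n h_i (τ_i − m)`. -/
def Hn (m : ℝ) (n : ℕ) (hs : ℕ → ℝ) (τ : Fin n → Bool) : ℝ :=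
  ∑ i : Fin n, hs i * (spin (τ i) - m)

/-- The `P_σ`-weight of the cylinder `[τ]`: `∏_{i=1}^n (1+mτ_i)/2`. -/
def Pcyl (m : ℝ) (n : ℕ) (τ : Fin n → Bool) : ℝ :=
  ∏ i : Fin n, (1 + m * spin (τ i)) / 2

noncomputable section

def Zf (m x : ℝ) : ℝ := (1 + m) / 2 * Real.exp x + (1 - m) / 2 * Real.exp (-x)
def pf (m x : ℝ) : ℝ := (1 + m) / 2 * Real.exp x / Zf m x
def qf (m x : ℝ) : ℝ := (1 - m) / 2 * Real.exp (-x) / Zf m x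
def rf (m x : ℝ) : ℝ := x * (pf m x - qf m x - m) - gfun m x

section scalar
variable {m : ℝ} (hm : m ∈ Set.Ioo (-1 : ℝ) 1)
include hm

lemma Zf_pos (x : ℝ) : 0 < Zf m x := by
  have h1 : 0 < 1 + m := by linarith [hm.1]
  have h2 : 0 < 1 - m := by linarith [hm.2]
  unfold Zf; positivity

lemma pf_pos (x : ℝ) : 0 < pf m x := by
  have h1 : 0 < 1 + m := by linarith [hm.1]
  have := Zf_pos hm x
  unfold pf; positivity

lemma qf_pos (x : ℝ) : 0 < qf m x := by
  have h1 : 0 < 1 - m := by linarith [hm.2]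
  have := Zf_pos hm x
  unfold qf; positivity

lemma pf_add_qf (x : ℝ) : pf m x + qf m x = 1 := by
  have := Zf_pos hm x
  unfold pf qf
  rw [← add_div, div_eq_one_iff_eq this.ne']
  rfl

lemma gfun_eq (x : ℝ) : gfun m x = Real.log (Zf m x) - m * x := by
  have := Zf_pos hm x
  have h : (1 + m) / 2 * Real.exp (x * (1 - m)) + (1 - m) / 2 * Real.exp (-(x * (1 + m)))
      = Zf m x * Real.exp (-(m*x)) := by
    unfold Zf
    rw [add_mul, mul_assoc, mul_assoc, ← Real.exp_add, ← Real.exp_add]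
    ring_nf
  unfold gfun
  rw [h, Real.log_mul this.ne' (Real.exp_pos _).ne', Real.log_exp]
  ring

lemma hasDerivAt_Zf (x : ℝ) :
    HasDerivAt (Zf m) ((pf m x - qf m x) * Zf m x) x := by
  have := Zf_pos hm x
  have h1 := ((Real.hasDerivAt_exp x).const_mul ((1+m)/2)).add
    (((Real.hasDerivAt_exp (-x)).comp x (hasDerivAt_neg x)).const_mul ((1-m)/2))
  refine h1.congr_deriv ?_
  unfold pf qf
  field_simp
  ring

lemma hasDerivAt_gfun (x : ℝ) : HasDerivAt (gfun m) (pf m x - qf m x - m) x := by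
  have := Zf_pos hm x
  have h1 : HasDerivAt (fun x => Real.log (Zf m x) - m * x) _ x :=
    ((hasDerivAt_Zf hm x).log this.ne').sub ((hasDerivAt_id x).const_mul m)
  have e : gfun m = fun x => Real.log (Zf m x) - m * x := by
    funext y; exact gfun_eq hm y
  rw [e]
  refine h1.congr_deriv ?_
  field_simp

lemma hasDerivAt_pf (x : ℝ) : HasDerivAt (pf m) (2 * pf m x * qf m x) x := by
  have := Zf_pos hm x
  have h1 := ((Real.hasDerivAt_exp x).const_mul ((1+m)/2)).div (hasDerivAt_Zf hm x) this.ne'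
  refine h1.congr_deriv ?_
  have e := pf_add_qf hm x
  have e2 : (1+m)/2 * Real.exp x = pf m x * Zf m x := by unfold pf; field_simp
  rw [e2]
  have e3 : pf m x * Zf m x * Zf m x - pf m x * Zf m x * ((pf m x - qf m x) * Zf m x)
     = (pf m x * (1 - pf m x + qf m x)) * Zf m x ^ 2 := by ring
  rw [e3, mul_div_assoc, div_self (by positivity)]
  have e4 : 1 - pf m x = qf m x := by linarith
  rw [e4]; ring

lemma hasDerivAt_qf (x : ℝ) : HasDerivAt (qf m) (-(2 * pf m x * qf m x)) x := by
  have e : qf m = fun y => 1 - pf m y := by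
    funext y; linarith [pf_add_qf hm y]
  rw [e]
  have := (hasDerivAt_pf hm x).const_sub 1
  refine this.congr_deriv ?_
  rw [e]

lemma hasDerivAt_rf (x : ℝ) : HasDerivAt (rf m) (x * (4 * pf m x * qf m x)) x := by
  have h := ((hasDerivAt_id x).mul (((hasDerivAt_pf hm x).sub (hasDerivAt_qf hm x)).sub_const m)).sub
    (hasDerivAt_gfun hm x)
  refine h.congr_deriv ?_
  simp only [Pi.sub_apply, id]
  ring

lemma continuous_pf : Continuous (pf m) :=
  continuous_iff_continuousAt.2 fun x => (hasDerivAt_pf hm x).continuousAt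
lemma continuous_qf : Continuous (qf m) :=
  continuous_iff_continuousAt.2 fun x => (hasDerivAt_qf hm x).continuousAt
lemma continuous_gfun : Continuous (gfun m) :=
  continuous_iff_continuousAt.2 fun x => (hasDerivAt_gfun hm x).continuousAt
lemma continuous_rf : Continuous (rf m) :=
  continuous_iff_continuousAt.2 fun x => (hasDerivAt_rf hm x).continuousAt

lemma rf_strictMonoOn : StrictMonoOn (rf m) (Set.Ici 0) := by
  apply strictMonoOn_of_deriv_pos (convex_Ici 0) (continuous_rf hm).continuousOn
  intro x hx
  rw [(hasDerivAt_rf hm x).deriv]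
  rw [interior_Ici] at hx
  have := pf_pos hm x
  have := qf_pos hm x
  have : 0 < x := hx
  positivity

lemma rf_strictAntiOn : StrictAntiOn (rf m) (Set.Iic 0) := by
  apply strictAntiOn_of_deriv_neg (convex_Iic 0) (continuous_rf hm).continuousOn
  intro x hx
  rw [(hasDerivAt_rf hm x).deriv]
  rw [interior_Iic] at hx
  have := pf_pos hm x
  have := qf_pos hm x
  have : x < 0 := hx
  have : 0 < 4 * pf m x * qf m x := by positivity
  nlinarith

lemma rf_lt {a b x : ℝ} (ha : 0 ≤ a) (hab : a < b) (hx : x ≠ 0) :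
    rf m (a * x) < rf m (b * x) := by
  rcases lt_or_gt_of_ne hx with h | h
  · apply rf_strictAntiOn hm
    · show b * x ≤ 0
      nlinarith
    · show a * x ≤ 0
      nlinarith
    · nlinarith
  · apply rf_strictMonoOn hm
    · show 0 ≤ a * x
      positivity
    · show 0 ≤ b * x
      nlinarith
    · nlinarith

lemma rf_le {a b x : ℝ} (ha : 0 ≤ a) (hab : a ≤ b) :
    rf m (a * x) ≤ rf m (b * x) := by
  rcases eq_or_ne x 0 with rfl | hx
  · simp
  rcases hab.eq_or_lt with rfl | h
  · exact le_rfl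
  exact (rf_lt hm ha h hx).le

lemma abs_gderiv_le (x : ℝ) : |pf m x - qf m x - m| ≤ 2 := by
  have := pf_pos hm x
  have := qf_pos hm x
  have := pf_add_qf hm x
  rw [abs_le]; constructor <;> linarith [hm.1, hm.2]

lemma abs_gfun_le (x : ℝ) : |gfun m x| ≤ 2 * |x| := by
  have h := Convex.norm_image_sub_le_of_norm_hasDerivWithin_le (f := gfun m)
    (f' := fun x => pf m x - qf m x - m) (C := 2) (s := Set.univ) (x := 0) (y := x)
    (fun y _ => (hasDerivAt_gfun hm y).hasDerivWithinAt)
    (fun y _ => by simpa using abs_gderiv_le hm y) convex_univ (Set.mem_univ _) (Set.mem_univ _)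
  have h0 : gfun m 0 = 0 := by
    have e : (1 + m) / 2 + (1 - m) / 2 = 1 := by ring
    unfold gfun; simp [e]
  simpa [h0] using h

lemma abs_rf_le (x : ℝ) : |rf m x| ≤ 4 * |x| := by
  unfold rf
  have h1 := abs_gfun_le hm x
  have h2 := abs_gderiv_le hm x
  calc _ ≤ |x * (pf m x - qf m x - m)| + |gfun m x| := abs_sub _ _
    _ ≤ |x| * 2 + 2 * |x| := by
      rw [abs_mul]; gcongr
    _ = _ := by ring

lemma gfun_tangent (x y : ℝ) :
    gfun m x + (pf m x - qf m x - m) * (y - x) ≤ gfun m y := by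
  have hc : ConvexOn ℝ Set.univ (gfun m) := by
    apply MonotoneOn.convexOn_of_deriv convex_univ (continuous_gfun hm).continuousOn
    · exact fun x _ => (hasDerivAt_gfun hm x).differentiableAt.differentiableWithinAt
    · have : deriv (gfun m) = fun x => pf m x - qf m x - m := by
        funext x; exact (hasDerivAt_gfun hm x).deriv
      rw [this]
      apply Monotone.monotoneOn
      apply monotone_of_hasDerivAt_nonneg (f' := fun x => 4 * pf m x * qf m x)
      · intro x
        refine (((hasDerivAt_pf hm x).sub (hasDerivAt_qf hm x)).sub_const m).congr_deriv ?_
        ring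
      · intro x
        have := pf_pos hm x
        have := qf_pos hm x
        simp only [Pi.zero_apply]; positivity
  rcases lt_trichotomy x y with h | h | h
  · have := hc.deriv_le_slope (Set.mem_univ x) (Set.mem_univ y) h (hasDerivAt_gfun hm x).differentiableAt
    rw [(hasDerivAt_gfun hm x).deriv, slope_def_field, le_div_iff₀ (by linarith)] at this
    linarith
  · subst h; simp
  · have := hc.slope_le_deriv (Set.mem_univ y) (Set.mem_univ x) h (hasDerivAt_gfun hm x).differentiableAt
    rw [(hasDerivAt_gfun hm x).deriv, slope_def_field, div_le_iff₀ (by linarith)] at this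
    linarith

end scalar
end

noncomputable section

def tri (t : ℝ) : ℝ := max (1 - |t|) 0
def Kf (x : ℝ) : ℝ := ∫ t, tri t * Real.cos (t * x)

lemma tri_nonneg (t : ℝ) : 0 ≤ tri t := le_max_right _ _
lemma tri_neg (t : ℝ) : tri (-t) = tri t := by simp [tri]
lemma continuous_tri : Continuous tri := by unfold tri; fun_prop
lemma tri_zero : tri 0 = 1 := by simp [tri]
lemma tri_compact : HasCompactSupport tri := by
  apply HasCompactSupport.intro (isCompact_Icc (a := (-1:ℝ)) (b := 1))
  intro x hx
  unfold tri
  apply max_eq_right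
  by_contra h
  apply hx
  have : |x| ≤ 1 := by linarith
  exact abs_le.1 this
lemma integrable_tri : Integrable tri := continuous_tri.integrable_of_hasCompactSupport tri_compact

lemma integrable_tri_mul_cos (x : ℝ) : Integrable (fun t => tri t * Real.cos (t * x)) := by
  apply Continuous.integrable_of_hasCompactSupport
  · have := continuous_tri
    fun_prop
  · exact tri_compact.mul_right

lemma continuous_Kf : Continuous Kf := by
  unfold Kf
  apply continuous_of_dominated (bound := tri)
  · intro x; exact (integrable_tri_mul_cos x).aestronglyMeasurable
  · intro x; refine Eventually.of_forall fun t => ?_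
    rw [norm_mul, Real.norm_of_nonneg (tri_nonneg t)]
    have := Real.abs_cos_le_one (t * x)
    have h2 := tri_nonneg t
    calc _ ≤ tri t * 1 := by gcongr; exact this
      _ = _ := by ring
  · exact integrable_tri
  · refine Eventually.of_forall fun t => ?_
    fun_prop

lemma Kf_eq_Ioo (x : ℝ) : Kf x = 2 * ∫ t in (0:ℝ)..1, (1 - t) * Real.cos (t * x) := by
  have h : ∀ t, tri t * Real.cos (t * x) = (fun s => max (1 - s) 0 * Real.cos (s * x)) |t| := by
    intro t
    unfold tri
    rcases abs_cases t with ⟨h, _⟩ | ⟨h, _⟩ <;> simp [h]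
  unfold Kf
  simp_rw [h]
  rw [integral_comp_abs (f := fun s => max (1 - s) 0 * Real.cos (s * x))]
  congr 1
  rw [intervalIntegral.integral_of_le zero_le_one]
  rw [setIntegral_eq_of_subset_of_forall_sdiff_eq_zero (s := Ioc 0 1)
    (f := fun s => max (1 - s) 0 * Real.cos (s * x)) measurableSet_Ioi
    Ioc_subset_Ioi_self]
  · apply setIntegral_congr_fun measurableSet_Ioc
    intro t ht
    simp only
    rw [max_eq_left (by linarith [ht.2])]
  · intro t ht
    have : 1 < t := by
      by_contra h'
      exact ht.2 ⟨ht.1, by linarith⟩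
    rw [max_eq_right (by linarith)]; simp

lemma Kf_zero : Kf 0 = 1 := by
  rw [Kf_eq_Ioo]
  have := intervalIntegral.integral_sub (μ := volume) (a := 0) (b := 1) (f := fun _ : ℝ => (1:ℝ)) (g := fun x => x)
    (by simp) (by simp)
  simp at this
  simp [this]
  norm_num

lemma Kf_of_ne {x : ℝ} (hx : x ≠ 0) : Kf x = 2 * (1 - Real.cos x) / x ^ 2 := by
  rw [Kf_eq_Ioo]
  have h := intervalIntegral.integral_eq_sub_of_hasDerivAt (a := 0) (b := 1)
    (f := fun t => (1 - t) * (Real.sin (t * x) / x) - Real.cos (t * x) / x ^ 2)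
    (f' := fun t => (1 - t) * Real.cos (t * x)) ?_ ?_
  · rw [h]; simp; field_simp; ring
  · intro t _
    have h1 : HasDerivAt (fun t => t * x) x t := by simpa using (hasDerivAt_id t).mul_const x
    have h2 := ((hasDerivAt_id t).const_sub 1).mul (h1.sin.div_const x)
    have h3 := h2.sub (h1.cos.div_const (x^2))
    refine h3.congr_deriv ?_
    simp
    field_simp
    ring
  · apply Continuous.intervalIntegrable; fun_prop

lemma Kf_nonneg (x : ℝ) : 0 ≤ Kf x := by
  rcases eq_or_ne x 0 with rfl | hx
  · rw [Kf_zero]; norm_num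
  · rw [Kf_of_ne hx]
    have := Real.cos_le_one x
    have : 0 ≤ 1 - Real.cos x := by linarith
    positivity

lemma Kf_pos {x : ℝ} (hx : |x| ≤ 1) : 0 < Kf x := by
  rcases eq_or_ne x 0 with rfl | hx0
  · rw [Kf_zero]; norm_num
  · rw [Kf_of_ne hx0]
    have h3 := Real.pi_gt_three
    have h4 := abs_le.1 hx
    have h1 : Real.cos x ≠ 1 := fun h => hx0
      ((Real.cos_eq_one_iff_of_lt_of_lt (by linarith [h4.1]) (by linarith [h4.2])).1 h)
    have h2 := lt_of_le_of_ne (Real.cos_le_one x) h1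
    have : 0 < 1 - Real.cos x := by linarith
    positivity

lemma Kf_le (x : ℝ) : Kf x ≤ 8 * (1 + x ^ 2)⁻¹ := by
  rcases eq_or_ne x 0 with rfl | hx
  · rw [Kf_zero]; norm_num
  · rw [Kf_of_ne hx, ← div_eq_mul_inv, div_le_div_iff₀ (by positivity) (by positivity)]
    have h1 := Real.neg_one_le_cos x
    have h2 := Real.one_sub_sq_div_two_le_cos (x := x)
    nlinarith [sq_nonneg x]

lemma integrable_Kf : Integrable Kf := by
  refine (integrable_inv_one_add_sq.const_mul 8).mono' continuous_Kf.aestronglyMeasurable ?_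
  refine Eventually.of_forall fun x => ?_
  rw [Real.norm_of_nonneg (Kf_nonneg x)]
  exact Kf_le x

lemma integrable_tri_mul_exp (x : ℝ) :
    Integrable (fun t => (tri t : ℂ) * Complex.exp (t * x * Complex.I)) := by
  refine (integrable_tri.ofReal (𝕜 := ℂ)).mono ?_ ?_
  · have := continuous_tri
    apply Continuous.aestronglyMeasurable
    fun_prop
  · refine Eventually.of_forall fun t => ?_
    rw [norm_mul]
    have : ‖Complex.exp (t * x * Complex.I)‖ = 1 := by
      rw [← Complex.ofReal_mul, Complex.norm_exp_ofReal_mul_I]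
    rw [this, mul_one]
    exact le_rfl

lemma Kf_complex (x : ℝ) : ∫ t, (tri t : ℂ) * Complex.exp (t * x * Complex.I) = (Kf x : ℂ) := by
  have h1 : ∫ t, (tri t : ℂ) * Complex.exp (t * x * Complex.I)
     = ∫ t, (tri t : ℂ) * Complex.exp (-(t * x * Complex.I)) := by
    rw [← integral_neg_eq_self]
    congr 1; funext t; simp [tri_neg]
  have hi : Integrable (fun t => (tri t : ℂ) * Complex.exp (-(t * x * Complex.I))) := by
    have := (integrable_tri_mul_exp (-x))
    simpa using this
  have h2 : 2 * ∫ t, (tri t : ℂ) * Complex.exp (t * x * Complex.I) = 2 * (Kf x : ℂ) := by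
    rw [two_mul]
    nth_rewrite 2 [h1]
    rw [← integral_add (integrable_tri_mul_exp x) hi]
    unfold Kf
    rw [← integral_complex_ofReal, ← integral_const_mul]
    congr 1; funext t
    push_cast
    rw [Complex.cos]
    ring_nf
  exact mul_left_cancel₀ two_ne_zero h2

open scoped FourierTransform in
lemma Kf_fourier (θ : ℝ) :
    ∫ x, (Kf x : ℂ) * Complex.exp (θ * x * Complex.I) = 2 * π * (tri θ : ℂ) := by
  have hF : 𝓕 (fun t => (tri t : ℂ)) = fun w => (Kf (2 * π * w) : ℂ) := by
    funext w
    rw [Real.fourier_real_eq_integral_exp_smul, ← Kf_complex, ← integral_neg_eq_self]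
    congr 1; funext t
    rw [smul_eq_mul, mul_comm, tri_neg]
    congr 2
    push_cast; ring
  have h := Continuous.fourierInv_fourier_eq (f := fun t => (tri t : ℂ))
    (by have := continuous_tri; fun_prop) integrable_tri.ofReal (by
      rw [hF]
      exact (integrable_Kf.comp_mul_left' (by positivity)).ofReal)
  have h2 := congrFun h θ
  rw [hF, Real.fourierInv_eq'] at h2
  have h3 := Measure.integral_comp_mul_left
    (fun x : ℝ => (Kf x : ℂ) * Complex.exp (θ * x * Complex.I)) (2 * π)
  have h4 : ∫ (x : ℝ), (Kf (2 * π * x) : ℂ) * Complex.exp (θ * ((2 * π * x : ℝ) : ℂ) * Complex.I)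
     = tri θ := by
    rw [← h2]
    congr 1; funext t
    rw [smul_eq_mul, mul_comm]
    congr 2
    simp
    ring
  rw [h4, abs_of_pos (by positivity)] at h3
  rw [h3]
  have : (π : ℂ) ≠ 0 := by exact_mod_cast Real.pi_ne_zero
  rw [Complex.real_smul]
  push_cast
  rw [← mul_assoc, mul_inv_cancel₀ (by simp), one_mul]

end

noncomputable section

def normk (ν : Measure ℝ) (k : ℝ → ℝ) : Measure ℝ :=
  (ENNReal.ofReal (∫ x, k x ∂ν))⁻¹ • ν.withDensity (fun x => ENNReal.ofReal (k x))

lemma normk_prob (ν : Measure ℝ) (k : ℝ → ℝ) (hk : Integrable k ν) (h0 : ∀ x, 0 ≤ k x)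
    (hpos : 0 < ∫ x, k x ∂ν) : IsProbabilityMeasure (normk ν k) := by
  constructor
  unfold normk
  rw [Measure.smul_apply, withDensity_apply _ MeasurableSet.univ, Measure.restrict_univ,
    ← ofReal_integral_eq_lintegral_ofReal hk (Eventually.of_forall h0), smul_eq_mul]
  apply ENNReal.inv_mul_cancel
  · simpa using hpos
  · exact ENNReal.ofReal_ne_top

lemma normk_integral {E : Type*} [NormedAddCommGroup E] [NormedSpace ℝ E]
    (ν : Measure ℝ) (k : ℝ → ℝ) (hk : Continuous k) (h0 : ∀ x, 0 ≤ k x) (F : ℝ → E) :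
    ∫ x, F x ∂(normk ν k) = (∫ x, k x ∂ν)⁻¹ • ∫ x, k x • F x ∂ν := by
  unfold normk
  rw [integral_smul_measure, integral_withDensity_eq_integral_toReal_smul
    hk.measurable.ennreal_ofReal (Eventually.of_forall fun _ => ENNReal.ofReal_lt_top)]
  have : 0 ≤ ∫ x, k x ∂ν := integral_nonneg h0
  rw [ENNReal.toReal_inv, ENNReal.toReal_ofReal this]
  congr 2
  funext x
  rw [ENNReal.toReal_ofReal (h0 x)]

lemma Kf_fubini (ν : Measure ℝ) [IsFiniteMeasure ν] {R : ℝ} (hR : 0 < R) (θ : ℝ) :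
    ∫ x, (Kf (x / R) : ℂ) * Complex.exp (θ * x * Complex.I) ∂ν
      = ∫ u, ((R * tri (R * (u - θ)) : ℝ) : ℂ) * charFun ν u := by
  have h1 : ∀ x : ℝ, (Kf (x / R) : ℂ) * Complex.exp (θ * x * Complex.I)
      = ∫ t, (tri t : ℂ) * Complex.exp (((θ + t / R : ℝ) : ℂ) * x * Complex.I) := by
    intro x
    rw [← Kf_complex, ← integral_mul_const]
    congr 1; funext t
    rw [mul_assoc, ← Complex.exp_add]
    congr 2
    push_cast; ring
  simp_rw [h1]
  rw [integral_integral_swap]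
  · have h2 : ∀ t : ℝ, ∫ x, (tri t : ℂ) * Complex.exp (((θ + t / R : ℝ) : ℂ) * x * Complex.I) ∂ν
       = (fun t : ℝ => (tri t : ℂ) * charFun ν (θ + t / R)) t := by
      intro t
      rw [integral_const_mul]
      simp only
      rw [charFun_apply_real]
    simp_rw [h2]
    have h3 := Measure.integral_comp_mul_left
      (fun t : ℝ => (tri t : ℂ) * charFun ν (θ + t / R)) R
    have h4 := integral_sub_right_eq_self (μ := volume)
      (fun x : ℝ => (tri (R * x) : ℂ) * charFun ν (θ + R * x / R)) θ
    rw [← h4, abs_of_pos (by positivity)] at h3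
    have h5 : ∫ t, (tri t : ℂ) * charFun ν (θ + t / R)
       = (R : ℝ) • ∫ x, (tri (R * (x - θ)) : ℂ) * charFun ν (θ + R * (x - θ) / R) := by
      rw [h3, smul_smul, mul_inv_cancel₀ hR.ne', one_smul]
    rw [h5, ← integral_smul]
    congr 1; funext u
    rw [Complex.real_smul]
    have : θ + R * (u - θ) / R = u := by field_simp; ring
    rw [this]; push_cast; ring
  · have hi : Integrable (fun z : ℝ × ℝ => ((1:ℝ) : ℂ) * (tri z.2 : ℂ)) (ν.prod volume) :=
      Integrable.mul_prod (f := fun _ => ((1:ℝ):ℂ)) (g := fun t => (tri t : ℂ))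
        (integrable_const _) integrable_tri.ofReal
    refine hi.mono ?_ ?_
    · have := continuous_tri
      apply Continuous.aestronglyMeasurable
      unfold Function.uncurry
      fun_prop
    · refine Eventually.of_forall fun z => ?_
      unfold Function.uncurry
      rw [norm_mul, norm_mul, ← Complex.ofReal_mul, Complex.norm_exp_ofReal_mul_I]
      simp

lemma Kf_fourier_scale {R : ℝ} (hR : 0 < R) (θ : ℝ) :
    ∫ x, (Kf (x / R) : ℂ) * Complex.exp (θ * x * Complex.I)
      = 2 * π * ((R * tri (R * (0 - θ)) : ℝ) : ℂ) := by
  have h := Measure.integral_comp_mul_left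
    (fun x : ℝ => (Kf x : ℂ) * Complex.exp ((R * θ : ℝ) * x * Complex.I)) R⁻¹
  rw [Kf_fourier] at h
  have e : R * (0 - θ) = -(R * θ) := by ring
  rw [e, tri_neg]
  simp only [inv_inv, abs_of_pos hR] at h
  rw [Complex.real_smul] at h
  push_cast at h ⊢
  rw [show (2 * π * (R * (tri (R * θ) : ℂ)) : ℂ) = R * (2 * π * tri (R * θ)) by ring, ← h]
  congr 1; funext x
  have hR' : (R : ℂ) ≠ 0 := by exact_mod_cast hR.ne'
  rw [div_eq_inv_mul]
  congr 2
  field_simp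

theorem breiman (ν : ℕ → Measure ℝ) [∀ n, IsFiniteMeasure (ν n)]
    (H : ∀ ψ : ℝ → ℝ, Continuous ψ → HasCompactSupport ψ →
      Tendsto (fun n => ∫ u, (ψ u : ℂ) * charFun (ν n) u) atTop (𝓝 (2 * π * (ψ 0 : ℂ))))
    (f : ℝ → ℝ) (hf : Continuous f) (hfc : HasCompactSupport f) :
    Tendsto (fun n => ∫ x, f x ∂(ν n)) atTop (𝓝 (∫ x, f x)) := by
  obtain ⟨R, hR, hRf⟩ : ∃ R > 0, ∀ x, R ≤ |x| → f x = 0 := by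
    obtain ⟨R, hR, h⟩ := hfc.exists_pos_le_norm
    exact ⟨R, hR, h⟩
  set k : ℝ → ℝ := fun x => Kf (x / R) with hkdef
  have hk : Continuous k := continuous_Kf.comp (by fun_prop)
  have hk0 : ∀ x, 0 ≤ k x := fun x => Kf_nonneg _
  have hkb : ∀ x, |k x| ≤ 8 := by
    intro x
    rw [abs_of_nonneg (hk0 x)]
    refine (Kf_le _).trans ?_
    have : (1 + (x / R) ^ 2)⁻¹ ≤ 1 := inv_le_one_of_one_le₀ (by nlinarith [sq_nonneg (x / R)])
    linarith
  have hki : ∀ n, Integrable k (ν n) := fun n =>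
    Integrable.of_bound hk.aestronglyMeasurable 8 (Eventually.of_forall hkb)
  have hkv : Integrable k := by
    have := integrable_Kf.comp_div hR.ne'
    exact this
  have hconv : ∀ θ : ℝ, Tendsto
      (fun n => ∫ x, (k x : ℂ) * Complex.exp (θ * x * Complex.I) ∂(ν n)) atTop
      (𝓝 (∫ x, (k x : ℂ) * Complex.exp (θ * x * Complex.I))) := by
    intro θ
    simp only [hkdef]
    rw [Kf_fourier_scale hR]
    simp_rw [fun n => Kf_fubini (ν n) hR θ]
    apply H (fun u => R * tri (R * (u - θ)))
    · exact continuous_const.mul (continuous_tri.comp (by fun_prop))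
    · have h1 : HasCompactSupport (fun u => tri (R * (u - θ))) := by
        have := tri_compact.comp_homeomorph
          ((Homeomorph.subRight θ).trans (Homeomorph.mulLeft₀ R hR.ne'))
        exact this
      exact h1.mul_left
  have hZ : Tendsto (fun n => ∫ x, k x ∂(ν n)) atTop (𝓝 (∫ x, k x)) := by
    have h := hconv 0
    simp only [Complex.ofReal_zero, zero_mul, Complex.exp_zero, mul_one] at h
    have h2 := (Complex.continuous_re.tendsto _).comp h
    rw [integral_complex_ofReal, Complex.ofReal_re] at h2
    refine h2.congr fun n => ?_
    simp only [Function.comp]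
    rw [integral_complex_ofReal, Complex.ofReal_re]
  have hZpos : 0 < ∫ x, k x := by
    have h := Kf_fourier_scale hR 0
    simp only [Complex.ofReal_zero, zero_mul, Complex.exp_zero, mul_one] at h
    rw [integral_complex_ofReal] at h
    simp only [sub_zero, mul_zero, tri_zero, mul_one] at h
    have h' : ∫ x, k x = 2 * π * R := by exact_mod_cast h
    rw [h']; positivity
  have hev : ∀ᶠ n in atTop, 0 < ∫ x, k x ∂(ν n) := hZ.eventually (lt_mem_nhds hZpos)
  classical
  let μ₀ : ProbabilityMeasure ℝ := ⟨normk volume k, normk_prob _ k hkv hk0 hZpos⟩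
  let μ : ℕ → ProbabilityMeasure ℝ := fun n =>
    if h : 0 < ∫ x, k x ∂(ν n) then ⟨normk (ν n) k, normk_prob _ k (hki n) hk0 h⟩ else μ₀
  have hμ : ∀ᶠ n in atTop, (μ n : Measure ℝ) = normk (ν n) k := by
    filter_upwards [hev] with n hn
    have : μ n = ⟨normk (ν n) k, normk_prob _ k (hki n) hk0 hn⟩ := dif_pos hn
    rw [this]
    rfl
  have hlevy : Tendsto μ atTop (𝓝 μ₀) := by
    rw [ProbabilityMeasure.tendsto_iff_tendsto_charFun]
    intro θ
    have e0 : charFun (μ₀ : Measure ℝ) θ = (∫ x, k x)⁻¹ • ∫ x, k x • Complex.exp (θ * x * Complex.I) := by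
      rw [charFun_apply_real]
      exact normk_integral volume k hk hk0 _
    rw [e0]
    have h1 := (hZ.inv₀ hZpos.ne').smul (hconv θ)
    simp only [Complex.real_smul] at h1 ⊢
    refine h1.congr' ?_
    filter_upwards [hμ] with n hn
    rw [hn, charFun_apply_real, normk_integral (ν n) k hk hk0 _]
    simp only [Complex.real_smul]
  have hkpos : ∀ x, |x| ≤ R → 0 < k x := by
    intro x hx
    apply Kf_pos
    rw [abs_div, abs_of_pos hR, div_le_one hR]
    exact hx
  have hgk : ∀ x, k x * (f x / k x) = f x := by
    intro x
    rcases le_or_gt (|x|) R with h | h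
    · have := hkpos x h
      field_simp
    · rw [hRf x h.le]; simp
  have hgc : Continuous (fun x => f x / k x) := by
    rw [continuous_iff_continuousAt]
    intro x
    rcases le_or_gt (|x|) R with h | h
    · exact hf.continuousAt.div hk.continuousAt (hkpos x h).ne'
    · have : (fun x => f x / k x) =ᶠ[𝓝 x] fun _ => 0 := by
        have : ∀ᶠ y in 𝓝 x, R < |y| := continuous_abs.continuousAt.eventually (lt_mem_nhds h)
        filter_upwards [this] with y hy
        rw [hRf y hy.le]; simp
      exact (continuousAt_const).congr this.symm
  have hgcs : HasCompactSupport (fun x => f x / k x) := by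
    simp_rw [div_eq_mul_inv]
    exact hfc.mul_right
  obtain ⟨B, hB⟩ := hgcs.exists_bound_of_continuous hgc
  let g : BoundedContinuousFunction ℝ ℝ := BoundedContinuousFunction.ofNormedAddCommGroup _ hgc B hB
  have hw := (ProbabilityMeasure.tendsto_iff_forall_integral_tendsto.1 hlevy) g
  have hg : ∀ ν' : Measure ℝ, ∫ x, g x ∂(normk ν' k) = (∫ x, k x ∂ν')⁻¹ * ∫ x, f x ∂ν' := by
    intro ν'
    rw [normk_integral ν' k hk hk0 _, smul_eq_mul]
    congr 2
    funext x
    exact hgk x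
  have e1 : ∫ x, g x ∂(μ₀ : Measure ℝ) = (∫ x, k x)⁻¹ * ∫ x, f x := hg volume
  rw [e1] at hw
  have hfin := hZ.mul hw
  rw [← mul_assoc, mul_inv_cancel₀ hZpos.ne', one_mul] at hfin
  refine hfin.congr' ?_
  filter_upwards [hμ, hev] with n hn hn2
  rw [hn, hg, ← mul_assoc, mul_inv_cancel₀ hn2.ne', one_mul]

end

noncomputable section

def chi (p q y : ℝ) : ℂ :=
  (p : ℂ) * Complex.exp ((2 * q * y : ℝ) * Complex.I) + (q : ℂ) * Complex.exp ((-(2 * p * y) : ℝ) * Complex.I)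

lemma norm_chi_le {p q : ℝ} (hp : 0 ≤ p) (hq : 0 ≤ q) (h : p + q = 1) (y : ℝ) :
    ‖chi p q y‖ ≤ Real.exp (-(4 * p * q * Real.sin y ^ 2) / 2) := by
  have e : chi p q y = Complex.exp ((-(p - q) * y : ℝ) * Complex.I) *
      (((p + q) * Real.cos y : ℝ) + ((p - q) * Real.sin y : ℝ) * Complex.I) := by
    have e1 : (((p + q) * Real.cos y : ℝ) + ((p - q) * Real.sin y : ℝ) * Complex.I : ℂ)
        = p * Complex.exp ((y:ℝ) * Complex.I) + q * Complex.exp ((-y:ℝ) * Complex.I) := by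
      rw [Complex.exp_mul_I, Complex.exp_mul_I]
      push_cast
      rw [Complex.cos_neg, Complex.sin_neg]; ring
    rw [e1]
    unfold chi
    rw [mul_add, mul_left_comm, mul_left_comm (Complex.exp _), ← Complex.exp_add, ← Complex.exp_add]
    congr 3
    · rw [← add_mul, ← Complex.ofReal_add]
      congr 2
      have : p = 1 - q := by linarith
      rw [this]; ring
    · rw [← add_mul, ← Complex.ofReal_add]
      congr 2
      have : q = 1 - p := by linarith
      rw [this]; ring
  have h2 : ‖chi p q y‖ ^ 2 = 1 - 4 * p * q * Real.sin y ^ 2 := by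
    rw [e, norm_mul, Complex.norm_exp_ofReal_mul_I, one_mul, ← Complex.normSq_eq_norm_sq,
      Complex.normSq_add_mul_I, h]
    have hs := Real.sin_sq_add_cos_sq y
    have : q = 1 - p := by linarith
    rw [this]
    have hc : Real.cos y ^ 2 = 1 - Real.sin y ^ 2 := by linarith
    rw [mul_pow, mul_pow, hc]; ring
  have h3 : ‖chi p q y‖ ^ 2 ≤ Real.exp (-(4 * p * q * Real.sin y ^ 2) / 2) ^ 2 := by
    rw [h2, ← Real.exp_nat_mul]
    have := Real.add_one_le_exp (-(4 * p * q * Real.sin y ^ 2))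
    refine le_trans (by linarith) (this.trans (le_of_eq ?_))
    congr 1; push_cast; ring
  exact le_of_sq_le_sq h3 (Real.exp_pos _).le

lemma exp_taylor (z : ℝ) :
    ‖Complex.exp (z * Complex.I) - (1 + z * Complex.I - z ^ 2 / 2)‖ ≤ 4 * |z| ^ 3 := by
  have e1 : ‖(z * Complex.I : ℂ)‖ = |z| := by simp
  rcases le_or_gt (|z|) 1 with h | h
  · have := Complex.norm_exp_sub_sum_le_norm_mul_exp (z * Complex.I) 3
    rw [e1] at this
    have e : (∑ m ∈ Finset.range 3, (z * Complex.I : ℂ) ^ m / (m.factorial : ℂ))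
       = 1 + z * Complex.I - z ^ 2 / 2 := by
      simp [Finset.sum_range_succ, mul_pow, Nat.factorial]
      ring
    rw [e] at this
    refine this.trans ?_
    have h1 : Real.exp |z| ≤ Real.exp 1 := Real.exp_le_exp.2 h
    have h2 := Real.exp_one_lt_d9
    have h3 : 0 ≤ |z| ^ 3 := by positivity
    nlinarith
  · have h1 : ‖Complex.exp (z * Complex.I)‖ = 1 := Complex.norm_exp_ofReal_mul_I z
    have h2 : ‖(1 + z * Complex.I - z ^ 2 / 2 : ℂ)‖ ≤ 1 + |z| + |z| ^ 2 / 2 := by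
      refine (norm_sub_le _ _).trans ?_
      refine add_le_add ((norm_add_le _ _).trans ?_) ?_
      · rw [e1]; simp
      · simp
    refine (norm_sub_le _ _).trans ?_
    rw [h1]
    refine (add_le_add le_rfl h2).trans ?_
    have : 1 ≤ |z|^2 := by nlinarith
    have : |z| ≤ |z|^3 := by nlinarith
    have : |z|^2 ≤ |z|^3 := by nlinarith
    nlinarith

lemma exp_neg_taylor {a y : ℝ} (ha : 0 ≤ a) (hay : a ≤ y ^ 2 / 2) :
    |Real.exp (-a) - (1 - a)| ≤ |y| ^ 3 := by
  have hy2 : y ^ 2 = |y| ^ 2 := (sq_abs y).symm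
  have h0 := abs_nonneg y
  rcases le_or_gt (|y|) 1 with h | h
  · have : a ≤ 1 := by nlinarith
    have h1 := Real.abs_exp_sub_one_sub_id_le (x := -a) (by rw [abs_neg, abs_of_nonneg ha]; exact this)
    rw [show Real.exp (-a) - (1 - a) = Real.exp (-a) - 1 - -a by ring]
    refine h1.trans ?_
    have h2 : a ^ 2 ≤ (y ^ 2 / 2) ^ 2 := by gcongr
    rw [hy2] at h2
    have h3 : |y| ^ 4 ≤ |y| ^ 3 := pow_le_pow_of_le_one h0 h (by norm_num)
    have h4 : 0 ≤ |y| ^ 3 := by positivity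
    nlinarith
  · have h1 := Real.add_one_le_exp (-a)
    have h2 : Real.exp (-a) ≤ 1 := Real.exp_le_one_iff.2 (by linarith)
    rw [abs_of_nonneg (by linarith)]
    have : |y|^2 ≤ |y|^3 := by nlinarith [sq_nonneg |y|]
    nlinarith

lemma chi_taylor {p q : ℝ} (hp : 0 ≤ p) (hq : 0 ≤ q) (h : p + q = 1) (y : ℝ) :
    ‖chi p q y - (Real.exp (-(4 * p * q * y ^ 2) / 2) : ℝ)‖ ≤ 33 * |y| ^ 3 := by
  have h1 := exp_taylor (2 * q * y)
  have h2 := exp_taylor (-(2 * p * y))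
  have hpq : 4 * p * q ≤ 1 := by nlinarith [sq_nonneg (p - q)]
  have h3 := exp_neg_taylor (a := (4 * p * q * y ^ 2) / 2) (y := y) (by positivity)
    (by nlinarith [sq_nonneg y])
  have hq' : (q : ℂ) = 1 - p := by
    have : q = 1 - p := by linarith
    rw [this]; push_cast; ring
  have e : chi p q y - (Real.exp (-(4 * p * q * y ^ 2) / 2) : ℝ) =
      p * (Complex.exp ((2 * q * y : ℝ) * Complex.I) - (1 + (2 * q * y : ℝ) * Complex.I - (2 * q * y : ℝ) ^ 2 / 2))
      + q * (Complex.exp ((-(2 * p * y) : ℝ) * Complex.I)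
          - (1 + (-(2 * p * y) : ℝ) * Complex.I - (-(2 * p * y) : ℝ) ^ 2 / 2))
      - ((Real.exp (-((4 * p * q * y ^ 2) / 2)) - (1 - (4 * p * q * y ^ 2) / 2) : ℝ) : ℂ) := by
    unfold chi
    rw [neg_div]
    push_cast
    rw [hq']
    ring
  rw [e]
  refine (norm_sub_le _ _).trans ?_
  rw [Complex.norm_real, Real.norm_eq_abs]
  have hA : ‖(p : ℂ) * (Complex.exp ((2 * q * y : ℝ) * Complex.I) - (1 + (2 * q * y : ℝ) * Complex.I - (2 * q * y : ℝ) ^ 2 / 2))‖ ≤ p * (32 * |y|^3) := by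
    rw [norm_mul, Complex.norm_real, Real.norm_of_nonneg hp]
    refine mul_le_mul_of_nonneg_left (h1.trans ?_) hp
    rw [abs_mul, abs_of_nonneg (by positivity : 0 ≤ 2 * q), mul_pow]
    have : (2 * q) ^ 3 ≤ 2 ^ 3 := by
      apply pow_le_pow_left₀ (by positivity); linarith
    have h4 : 0 ≤ |y| ^ 3 := by positivity
    nlinarith
  have hB : ‖(q : ℂ) * (Complex.exp ((-(2 * p * y) : ℝ) * Complex.I)
          - (1 + (-(2 * p * y) : ℝ) * Complex.I - (-(2 * p * y) : ℝ) ^ 2 / 2))‖ ≤ q * (32 * |y|^3) := by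
    rw [norm_mul, Complex.norm_real, Real.norm_of_nonneg hq]
    refine mul_le_mul_of_nonneg_left (h2.trans ?_) hq
    rw [abs_neg, abs_mul, abs_of_nonneg (by positivity : 0 ≤ 2 * p), mul_pow]
    have : (2 * p) ^ 3 ≤ 2 ^ 3 := by
      apply pow_le_pow_left₀ (by positivity); linarith
    have h4 : 0 ≤ |y| ^ 3 := by positivity
    nlinarith
  have hC := (norm_add_le _ _).trans (add_le_add hA hB)
  have : p * (32 * |y|^3) + q * (32 * |y|^3) = 32 * |y|^3 := by rw [← add_mul, h, one_mul]
  linarith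

lemma prod_diff_le {ι : Type*} (s : Finset ι) (a b : ι → ℂ) (ha : ∀ i, ‖a i‖ ≤ 1) (hb : ∀ i, ‖b i‖ ≤ 1) :
    ‖∏ i ∈ s, a i - ∏ i ∈ s, b i‖ ≤ ∑ i ∈ s, ‖a i - b i‖ := by
  classical
  induction s using Finset.induction_on with
  | empty => simp
  | insert i s hi ih =>
    rw [Finset.prod_insert hi, Finset.prod_insert hi, Finset.sum_insert hi]
    have e : a i * ∏ i ∈ s, a i - b i * ∏ i ∈ s, b i
      = (a i - b i) * ∏ i ∈ s, a i + b i * (∏ i ∈ s, a i - ∏ i ∈ s, b i) := by ring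
    rw [e]
    refine (norm_add_le _ _).trans (add_le_add ?_ ?_)
    · rw [norm_mul]
      have : ‖∏ i ∈ s, a i‖ ≤ 1 := by
        rw [norm_prod]; exact Finset.prod_le_one (fun _ _ => norm_nonneg _) (fun i _ => ha i)
      exact mul_le_of_le_one_right (norm_nonneg _) this
    · rw [norm_mul]
      exact (mul_le_of_le_one_left (norm_nonneg _) (hb i)).trans ih

end

noncomputable section

lemma continuous_chi (p q : ℝ) : Continuous (chi p q) := by
  unfold chi; fun_prop

lemma norm_prod_chi_le (p q h : ℕ → ℝ) (hp : ∀ i, 0 ≤ p i) (hq : ∀ i, 0 ≤ q i)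
    (hpq : ∀ i, p i + q i = 1) (n : ℕ) (u : ℝ) :
    ‖∏ i ∈ Finset.range n, chi (p i) (q i) (u * h i)‖ ≤
      Real.exp (-(∑ i ∈ Finset.range n, 4 * p i * q i * Real.sin (u * h i) ^ 2) / 2) := by
  rw [norm_prod, ← Finset.sum_neg_distrib, Finset.sum_div, Real.exp_sum]
  exact Finset.prod_le_prod (fun _ _ => norm_nonneg _)
    (fun i _ => norm_chi_le (hp i) (hq i) (hpq i) _)

lemma prod_chi_tendsto (p q : ℕ → ℕ → ℝ) (h : ℕ → ℝ) (hp : ∀ n i, 0 ≤ p n i) (hq : ∀ n i, 0 ≤ q n i)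
    (hpq : ∀ n i, p n i + q n i = 1) (V : ℕ → ℝ)
    (hV : ∀ n, V n = ∑ i ∈ Finset.range n, 4 * p n i * q n i * h i ^ 2)
    (K κ : ℝ) (hκ : 0 < κ)
    (h3 : ∀ᶠ n : ℕ in atTop, ∑ i ∈ Finset.range n, |h i| ^ 3 ≤ K * n)
    (hVl : ∀ᶠ n : ℕ in atTop, κ * n ≤ V n) (s : ℝ) :
    Tendsto (fun n => ∏ i ∈ Finset.range n, chi (p n i) (q n i) (s / √(V n) * h i)) atTop
      (𝓝 ((Real.exp (-s ^ 2 / 2) : ℝ) : ℂ)) := by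
  rw [tendsto_iff_norm_sub_tendsto_zero]
  have hlim : Tendsto (fun n : ℕ => (33 * |s| ^ 3 * K / (κ * √κ)) * (√(n : ℝ))⁻¹) atTop (𝓝 0) := by
    have : Tendsto (fun n : ℕ => (√(n : ℝ))⁻¹) atTop (𝓝 0) :=
      tendsto_inv_atTop_zero.comp (Real.tendsto_sqrt_atTop.comp tendsto_natCast_atTop_atTop)
    simpa using this.const_mul (33 * |s| ^ 3 * K / (κ * √κ))
  refine squeeze_zero' (Eventually.of_forall fun _ => norm_nonneg _) ?_ hlim
  filter_upwards [h3, hVl, eventually_gt_atTop 0] with n h3 hVl hn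
  have hn' : (0:ℝ) < n := by exact_mod_cast hn
  have hVpos : 0 < V n := lt_of_lt_of_le (by positivity) hVl
  have hsV : 0 < √(V n) := Real.sqrt_pos.2 hVpos
  have e : ((Real.exp (-s ^ 2 / 2) : ℝ) : ℂ) =
      ∏ i ∈ Finset.range n, ((Real.exp (-(4 * p n i * q n i * (s / √(V n) * h i) ^ 2) / 2) : ℝ) : ℂ) := by
    rw [← Complex.ofReal_prod, ← Real.exp_sum]
    congr 2
    rw [← Finset.sum_div, Finset.sum_neg_distrib]
    congr 2
    have : ∀ i, 4 * p n i * q n i * (s / √(V n) * h i) ^ 2 = s ^ 2 / V n * (4 * p n i * q n i * h i ^ 2) := by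
      intro i
      rw [mul_pow, div_pow, Real.sq_sqrt hVpos.le]; ring
    simp_rw [this]
    rw [← Finset.mul_sum, ← hV n]
    field_simp
  rw [e]
  refine (prod_diff_le _ _ _ ?_ ?_).trans ?_
  · intro i
    refine (norm_chi_le (hp n i) (hq n i) (hpq n i) _).trans (Real.exp_le_one_iff.2 ?_)
    have := hp n i
    have := hq n i
    rw [neg_div]
    apply neg_nonpos_of_nonneg
    positivity
  · intro i
    rw [Complex.norm_real, Real.norm_of_nonneg (Real.exp_pos _).le]
    apply Real.exp_le_one_iff.2
    have := hp n i
    have := hq n i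
    rw [neg_div]
    apply neg_nonpos_of_nonneg
    positivity
  · calc _ ≤ ∑ i ∈ Finset.range n, 33 * |s / √(V n) * h i| ^ 3 :=
        Finset.sum_le_sum fun i _ => chi_taylor (hp n i) (hq n i) (hpq n i) _
      _ = 33 * |s| ^ 3 / (V n * √(V n)) * ∑ i ∈ Finset.range n, |h i| ^ 3 := by
        rw [Finset.mul_sum]
        refine Finset.sum_congr rfl fun i _ => ?_
        rw [abs_mul, abs_div, abs_of_pos hsV, mul_pow, div_pow, pow_succ (√(V n)), Real.sq_sqrt hVpos.le]
        ring
      _ ≤ 33 * |s| ^ 3 / ((κ * n) * √(κ * n)) * (K * n) := by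
        have h0 : 0 ≤ ∑ i ∈ Finset.range n, |h i| ^ 3 := Finset.sum_nonneg fun i _ => by positivity
        gcongr
      _ = _ := by
        rw [Real.sqrt_mul hκ.le]
        field_simp

theorem key_limit (p q : ℕ → ℕ → ℝ) (h : ℕ → ℝ) (hp : ∀ n i, 0 ≤ p n i) (hq : ∀ n i, 0 ≤ q n i)
    (hpq : ∀ n i, p n i + q n i = 1) (V d : ℕ → ℝ)
    (hV : ∀ n, V n = ∑ i ∈ Finset.range n, 4 * p n i * q n i * h i ^ 2)
    (K κ : ℝ) (hK : 0 < K) (hκ : 0 < κ)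
    (h3 : ∀ᶠ n : ℕ in atTop, ∑ i ∈ Finset.range n, |h i| ^ 3 ≤ K * n)
    (hVl : ∀ᶠ n : ℕ in atTop, κ * n ≤ V n)
    (hVu : ∀ᶠ n : ℕ in atTop, V n ≤ K * n)
    (hsin : ∀ T > 0, ∃ κ > 0, ∀ᶠ n : ℕ in atTop, ∀ u : ℝ, |u| ≤ T →
      κ * n * u ^ 2 ≤ ∑ i ∈ Finset.range n, 4 * p n i * q n i * Real.sin (u * h i) ^ 2)
    (hd : Tendsto (fun n => d n / √(V n)) atTop (𝓝 0))
    (ψ : ℝ → ℝ) (hψ : Continuous ψ) (hψc : HasCompactSupport ψ) :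
    Tendsto (fun n => ∫ u : ℝ, (ψ u : ℂ) * ((√(2 * π * V n) : ℝ) * (Complex.exp ((u * d n : ℝ) * Complex.I) *
      ∏ i ∈ Finset.range n, chi (p n i) (q n i) (u * h i)))) atTop (𝓝 (2 * π * (ψ 0 : ℂ))) := by
  obtain ⟨T, hT, hTψ⟩ : ∃ R > 0, ∀ x, R ≤ |x| → ψ x = 0 := by
    obtain ⟨R, hR, h⟩ := hψc.exists_pos_le_norm
    exact ⟨R, hR, h⟩
  obtain ⟨B, hB⟩ := hψc.exists_bound_of_continuous hψ
  obtain ⟨κ', hκ', hs⟩ := hsin T hT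
  set F : ℕ → ℝ → ℂ := fun n u => (ψ u : ℂ) * (Complex.exp ((u * d n : ℝ) * Complex.I) *
      ∏ i ∈ Finset.range n, chi (p n i) (q n i) (u * h i)) with hF
  have hFc : ∀ n, Continuous (F n) := by
    intro n
    simp only [hF]
    have : ∀ i, Continuous (fun u => chi (p n i) (q n i) (u * h i)) := fun i =>
      (continuous_chi _ _).comp (by fun_prop)
    fun_prop
  have hVpos : ∀ᶠ n : ℕ in atTop, 0 < V n := by
    filter_upwards [hVl, eventually_gt_atTop 0] with n h1 hn
    have hn' : (0:ℝ) < n := by exact_mod_cast hn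
    exact lt_of_lt_of_le (by positivity) h1
  have hVtop : Tendsto V atTop atTop :=
    tendsto_atTop_mono' _ hVl (tendsto_natCast_atTop_atTop.const_mul_atTop hκ)
  have hsVtop : Tendsto (fun n => √(V n)) atTop atTop := Real.tendsto_sqrt_atTop.comp hVtop
  have main : Tendsto (fun n => ∫ s : ℝ, F n (s / √(V n))) atTop
      (𝓝 (∫ s : ℝ, (ψ 0 : ℂ) * ((Real.exp (-s ^ 2 / 2) : ℝ) : ℂ))) := by
    apply tendsto_integral_filter_of_dominated_convergence (fun s => B * Real.exp (-(κ' / K / 2) * s ^ 2))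
    · exact Eventually.of_forall fun n => ((hFc n).comp (by fun_prop)).aestronglyMeasurable
    · filter_upwards [hs, hVpos, hVu] with n hs hVpos hVu
      refine Eventually.of_forall fun s => ?_
      have hsV : 0 < √(V n) := Real.sqrt_pos.2 hVpos
      have hB0 : 0 ≤ B := (norm_nonneg _).trans (hB 0)
      rcases le_or_gt (|s / √(V n)|) T with hle | hgt
      · simp only [hF]
        rw [norm_mul, norm_mul, Complex.norm_exp_ofReal_mul_I, one_mul, Complex.norm_real]
        refine mul_le_mul (hB _) ?_ (norm_nonneg _) hB0
        refine (norm_prod_chi_le _ _ h (hp n) (hq n) (hpq n) n _).trans ?_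
        apply Real.exp_le_exp.2
        have h1 := hs _ hle
        have h2 : κ' / K * s ^ 2 ≤ κ' * n * (s / √(V n)) ^ 2 := by
          rw [div_pow, Real.sq_sqrt hVpos.le]
          rw [show κ' * n * (s ^ 2 / V n) = κ' * s ^ 2 * (n / V n) by ring,
            show κ' / K * s ^ 2 = κ' * s ^ 2 * (1 / K) by ring]
          refine mul_le_mul_of_nonneg_left ?_ (by positivity)
          rw [div_le_div_iff₀ hK hVpos]; linarith
        linarith
      · simp only [hF]
        rw [hTψ _ hgt.le]
        simp only [Complex.ofReal_zero, zero_mul, norm_zero]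
        positivity
    · exact (integrable_exp_neg_mul_sq (by positivity)).const_mul B
    · refine Eventually.of_forall fun s => ?_
      have hs0 : Tendsto (fun n => s / √(V n)) atTop (𝓝 0) := tendsto_const_nhds.div_atTop hsVtop
      have h1 : Tendsto (fun n => (ψ (s / √(V n)) : ℂ)) atTop (𝓝 (ψ 0 : ℂ)) :=
        ((Complex.continuous_ofReal.comp hψ).tendsto 0).comp hs0
      have h2 : Tendsto (fun n => Complex.exp ((s / √(V n) * d n : ℝ) * Complex.I)) atTop (𝓝 1) := by
        have e : ∀ n, s / √(V n) * d n = s * (d n / √(V n)) := fun n => by ring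
        have h4 : Tendsto (fun n => s / √(V n) * d n) atTop (𝓝 0) := by
          simp_rw [e]; simpa using hd.const_mul s
        have h5 : Continuous (fun x : ℝ => Complex.exp (x * Complex.I)) := by fun_prop
        have := (h5.tendsto 0).comp h4
        simp only [Complex.ofReal_zero, zero_mul, Complex.exp_zero] at this
        exact this
      have h4 := prod_chi_tendsto p q h hp hq hpq V hV K κ hκ h3 hVl s
      have := h1.mul (h2.mul h4)
      simpa only [one_mul] using this
  have hlim : ∫ s : ℝ, (ψ 0 : ℂ) * ((Real.exp (-s ^ 2 / 2) : ℝ) : ℂ) = (ψ 0 : ℂ) * (√(2 * π) : ℝ) := by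
    rw [integral_const_mul, integral_complex_ofReal]
    congr 2
    have := integral_gaussian (1 / 2)
    rw [show π / (1 / 2) = 2 * π by ring] at this
    rw [← this]
    congr 1; funext s; congr 1; ring
  rw [hlim] at main
  have hfin := main.const_mul ((√(2 * π) : ℝ) : ℂ)
  have e : ((√(2 * π) : ℝ) : ℂ) * ((ψ 0 : ℂ) * (√(2 * π) : ℝ)) = 2 * π * (ψ 0 : ℂ) := by
    have : ((√(2 * π) : ℝ) : ℂ) * (√(2 * π) : ℝ) = 2 * π := by
      rw [← Complex.ofReal_mul, Real.mul_self_sqrt (by positivity)]; push_cast; ring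
    rw [← this]; ring
  rw [e] at hfin
  refine hfin.congr' ?_
  filter_upwards [hVpos] with n hVpos
  have hsV : 0 < √(V n) := Real.sqrt_pos.2 hVpos
  rw [Measure.integral_comp_div (F n), abs_of_pos hsV, Complex.real_smul, ← mul_assoc, ← Complex.ofReal_mul,
    ← Real.sqrt_mul (by positivity), ← integral_const_mul]
  congr 1; funext u
  simp only [hF]
  ring

end

noncomputable section

def Qcyl (m lam : ℝ) (n : ℕ) (hs : ℕ → ℝ) (τ : Fin n → Bool) : ℝ :=
  ∏ i : Fin n, if τ i then pf m (lam * hs i) else qf m (lam * hs i)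

def nuM (m lam c a : ℝ) (n : ℕ) (hs : ℕ → ℝ) : Measure ℝ :=
  ∑ τ : Fin n → Bool, ENNReal.ofReal (c * Qcyl m lam n hs τ) • Measure.dirac (Hn m n hs τ - a)

instance (m lam c a : ℝ) (n : ℕ) (hs : ℕ → ℝ) : IsFiniteMeasure (nuM m lam c a n hs) := by
  constructor
  unfold nuM
  rw [Measure.finsetSum_apply]
  simp
  
lemma Qcyl_nonneg {m : ℝ} (hm : m ∈ Set.Ioo (-1 : ℝ) 1) (lam : ℝ) (n : ℕ) (hs : ℕ → ℝ) (τ : Fin n → Bool) :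
    0 ≤ Qcyl m lam n hs τ := by
  unfold Qcyl
  apply Finset.prod_nonneg
  intro i _
  split_ifs
  · exact (pf_pos hm _).le
  · exact (qf_pos hm _).le

lemma nuM_integral {E : Type*} [NormedAddCommGroup E] [NormedSpace ℝ E] [CompleteSpace E]
    {m : ℝ} (hm : m ∈ Set.Ioo (-1 : ℝ) 1) (lam c a : ℝ) (hc : 0 ≤ c) (n : ℕ)
    (hs : ℕ → ℝ) (f : ℝ → E) :
    ∫ x, f x ∂(nuM m lam c a n hs)
      = ∑ τ : Fin n → Bool, (c * Qcyl m lam n hs τ) • f (Hn m n hs τ - a) := by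
  unfold nuM
  rw [integral_finsetSum_measure]
  · refine Finset.sum_congr rfl fun τ _ => ?_
    rw [integral_smul_measure, integral_dirac, ENNReal.toReal_ofReal]
    exact mul_nonneg hc (Qcyl_nonneg hm _ _ _ _)
  · intro τ _
    apply Integrable.smul_measure _ ENNReal.ofReal_ne_top
    exact integrable_dirac (by simp)

lemma nuM_charFun {m : ℝ} (hm : m ∈ Set.Ioo (-1 : ℝ) 1) (lam c a d : ℝ) (hc : 0 ≤ c) (n : ℕ)
    (hs : ℕ → ℝ)
    (hd : d = ∑ i ∈ Finset.range n, hs i * (pf m (lam * hs i) - qf m (lam * hs i) - m) - a) (u : ℝ) :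
    charFun (nuM m lam c a n hs) u = (c : ℂ) * (Complex.exp ((u * d : ℝ) * Complex.I) *
      ∏ i ∈ Finset.range n, chi (pf m (lam * hs i)) (qf m (lam * hs i)) (u * hs i)) := by
  rw [charFun_apply_real, nuM_integral hm lam c a hc]
  have e1 : ∏ i ∈ Finset.range n, chi (pf m (lam * hs i)) (qf m (lam * hs i)) (u * hs i)
     = ∏ i : Fin n, ∑ b : Bool, (((if b then pf m (lam * hs i) else qf m (lam * hs i) : ℝ) : ℂ) *
        Complex.exp (((spin b - (pf m (lam * hs i) - qf m (lam * hs i))) * (u * hs i) : ℝ) * Complex.I)) := by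
    rw [Finset.prod_range]
    refine Finset.prod_congr rfl fun i _ => ?_
    have := pf_add_qf hm (lam * hs i)
    have e1 : 1 - (pf m (lam * hs i) - qf m (lam * hs i)) = 2 * qf m (lam * hs i) := by linarith
    have e2 : -1 - (pf m (lam * hs i) - qf m (lam * hs i)) = -(2 * pf m (lam * hs i)) := by linarith
    rw [Fintype.sum_bool]
    simp only [spin, if_true, Bool.false_eq_true, if_false]
    rw [e1, e2]
    unfold chi
    congr 4 <;> push_cast <;> ring
  rw [e1, Finset.prod_univ_sum, Fintype.piFinset_univ, Finset.mul_sum, Finset.mul_sum]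
  refine Finset.sum_congr rfl fun τ _ => ?_
  rw [Finset.prod_mul_distrib, ← Complex.exp_sum, ← Finset.sum_mul, Complex.real_smul]
  rw [← Complex.ofReal_prod, ← Complex.ofReal_sum, mul_left_comm (Complex.exp _), ← Complex.exp_add, ← add_mul,
    ← Complex.ofReal_add]
  have e2 : u * d + ∑ i : Fin n, (spin (τ i) - (pf m (lam * hs i) - qf m (lam * hs i))) * (u * hs i)
      = u * (Hn m n hs τ - a) := by
    rw [hd, Finset.sum_range]
    unfold Hn
    rw [sub_eq_add_neg _ a, mul_add, Finset.mul_sum, sub_eq_add_neg _ a, mul_add, Finset.mul_sum, add_right_comm,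
      ← Finset.sum_add_distrib]
    congr 1
    refine Finset.sum_congr rfl fun i _ => ?_
    ring
  rw [e2]
  unfold Qcyl
  push_cast
  ring

lemma Pcyl_eq {m : ℝ} (hm : m ∈ Set.Ioo (-1 : ℝ) 1) (lam : ℝ) (n : ℕ) (hs : ℕ → ℝ) (τ : Fin n → Bool) :
    Pcyl m n τ = Qcyl m lam n hs τ *
      Real.exp (∑ i ∈ Finset.range n, gfun m (lam * hs i) - lam * Hn m n hs τ) := by
  unfold Pcyl Qcyl Hn
  rw [Finset.sum_range, Finset.mul_sum, ← Finset.sum_sub_distrib, Real.exp_sum, ← Finset.prod_mul_distrib]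
  refine Finset.prod_congr rfl fun i _ => ?_
  set y := lam * hs i with hy
  have hZ := Zf_pos hm y
  rw [gfun_eq hm, show lam * (hs i * (spin (τ i) - m)) = y * (spin (τ i) - m) by rw [hy]; ring]
  cases τ i
  · simp only [spin, Bool.false_eq_true, if_false]
    rw [show Real.log (Zf m y) - m * y - y * (-1 - m) = Real.log (Zf m y) + y by ring, Real.exp_add,
      Real.exp_log hZ]
    unfold qf
    rw [Real.exp_neg]
    field_simp
    ring
  · simp only [spin, if_true]
    rw [show Real.log (Zf m y) - m * y - y * (1 - m) = Real.log (Zf m y) + (-y) by ring, Real.exp_add,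
      Real.exp_log hZ]
    unfold pf
    rw [Real.exp_neg]
    field_simp

lemma abs_exp_sub_one_le' (y : ℝ) : |Real.exp y - 1| ≤ Real.exp |y| - 1 := by
  rw [abs_le]
  constructor
  · have h1 := Real.add_one_le_exp y
    have h2 := Real.add_one_le_exp |y|
    have := neg_abs_le y
    linarith
  · have := Real.exp_le_exp.2 (le_abs_self y)
    linarith

lemma tilt_limit (ν : ℕ → Measure ℝ) [∀ n, IsFiniteMeasure (ν n)]
    (H : ∀ f : ℝ → ℝ, Continuous f → HasCompactSupport f →
      Tendsto (fun n => ∫ x, f x ∂(ν n)) atTop (𝓝 (∫ x, f x)))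
    (Λ : ℕ → ℝ) (l : ℝ) (hΛ : Tendsto Λ atTop (𝓝 l))
    (f : ℝ → ℝ) (hf : Continuous f) (hfc : HasCompactSupport f) :
    Tendsto (fun n => ∫ x, f x * Real.exp (-(Λ n * x)) ∂(ν n)) atTop
      (𝓝 (∫ x, f x * Real.exp (-(l * x)))) := by
  obtain ⟨R, hR, hRf⟩ : ∃ R > 0, ∀ x, R ≤ |x| → f x = 0 := by
    obtain ⟨R, hR, h⟩ := hfc.exists_pos_le_norm
    exact ⟨R, hR, h⟩
  have h1 := H (fun x => f x * Real.exp (-(l * x))) (by fun_prop) hfc.mul_right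
  have h2 := H (fun x => |f x| * Real.exp (-(l * x))) (by fun_prop)
    (HasCompactSupport.mul_right (by exact hfc.comp_left abs_zero))
  have h3 : Tendsto (fun n => Real.exp (|l - Λ n| * R) - 1) atTop (𝓝 0) := by
    have hc : Continuous (fun y : ℝ => Real.exp (|l - y| * R) - 1) := by fun_prop
    have := (hc.tendsto l).comp hΛ
    simp only [sub_self, abs_zero, zero_mul, Real.exp_zero] at this
    exact this
  have h4 := h3.mul h2
  rw [zero_mul] at h4
  have h5 : Tendsto (fun n => ∫ x, f x * Real.exp (-(Λ n * x)) ∂(ν n)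
      - ∫ x, f x * Real.exp (-(l * x)) ∂(ν n)) atTop (𝓝 0) := by
    refine squeeze_zero_norm (fun n => ?_) h4
    have i1 : Integrable (fun x => f x * Real.exp (-(Λ n * x))) (ν n) :=
      Continuous.integrable_of_hasCompactSupport (by fun_prop) hfc.mul_right
    have i2 : Integrable (fun x => f x * Real.exp (-(l * x))) (ν n) :=
      Continuous.integrable_of_hasCompactSupport (by fun_prop) hfc.mul_right
    have i3 : Integrable (fun x => |f x| * Real.exp (-(l * x))) (ν n) :=
      Continuous.integrable_of_hasCompactSupport (by fun_prop) 
        (HasCompactSupport.mul_right (by exact hfc.comp_left abs_zero))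
    rw [← integral_sub i1 i2, ← integral_const_mul]
    refine norm_integral_le_of_norm_le (i3.const_mul _) (Eventually.of_forall fun x => ?_)
    rcases le_or_gt R (|x|) with h | h
    · simp [hRf x h]
    · have e : f x * Real.exp (-(Λ n * x)) - f x * Real.exp (-(l * x))
         = (Real.exp ((l - Λ n) * x) - 1) * (f x * Real.exp (-(l * x))) := by
        rw [sub_mul, one_mul, mul_left_comm, ← Real.exp_add]
        congr 3
        ring
      rw [e, norm_mul, norm_mul, Real.norm_eq_abs, Real.norm_eq_abs, Real.norm_of_nonneg (Real.exp_pos _).le]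
      refine mul_le_mul_of_nonneg_right ?_ (by positivity)
      refine (abs_exp_sub_one_le' _).trans ?_
      rw [abs_mul]
      gcongr
  have := h5.add h1
  simpa using this

theorem det_limit {m : ℝ} (hm : m ∈ Set.Ioo (-1 : ℝ) 1) (h : ℕ → ℝ) (Λ C A V : ℕ → ℝ) (l : ℝ) (hl : 0 < l)
    (hΛ : Tendsto Λ atTop (𝓝 l))
    (hV : ∀ n, V n = ∑ i ∈ Finset.range n, 4 * pf m (Λ n * h i) * qf m (Λ n * h i) * h i ^ 2)
    (hC : ∀ᶠ n in atTop, ∑ i ∈ Finset.range n, rf m (Λ n * h i) = C n)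
    (hA : ∀ n, A n = (C n + ∑ i ∈ Finset.range n, gfun m (Λ n * h i) - Real.log (√(2 * π * V n))) / Λ n)
    (K κ : ℝ) (hK : 0 < K) (hκ : 0 < κ)
    (h3 : ∀ᶠ n : ℕ in atTop, ∑ i ∈ Finset.range n, |h i| ^ 3 ≤ K * n)
    (hVl : ∀ᶠ n : ℕ in atTop, κ * n ≤ V n)
    (hVu : ∀ᶠ n : ℕ in atTop, V n ≤ K * n)
    (hsin : ∀ T > 0, ∃ κ > 0, ∀ᶠ n : ℕ in atTop, ∀ u : ℝ, |u| ≤ T →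
      κ * n * u ^ 2 ≤ ∑ i ∈ Finset.range n, 4 * pf m (Λ n * h i) * qf m (Λ n * h i) * Real.sin (u * h i) ^ 2)
    (f : ℝ → ℝ) (hf : Continuous f) (hfc : HasCompactSupport f) :
    Tendsto (fun n => Real.exp (C n) * ∑ τ : Fin n → Bool, Pcyl m n τ * f (Hn m n h τ - A n)) atTop
      (𝓝 (∫ x : ℝ, f x * Real.exp (-(l * x)))) := by
  set d : ℕ → ℝ := fun n => ∑ i ∈ Finset.range n, h i * (pf m (Λ n * h i) - qf m (Λ n * h i) - m) - A n with hd
  have hΛpos : ∀ᶠ n in atTop, l / 2 < Λ n := hΛ.eventually (lt_mem_nhds (by linarith))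
  have hVpos : ∀ᶠ n : ℕ in atTop, 0 < V n := by
    filter_upwards [hVl, eventually_gt_atTop 0] with n h1 hn
    have hn' : (0:ℝ) < n := by exact_mod_cast hn
    exact lt_of_lt_of_le (by positivity) h1
  have hVtop : Tendsto V atTop atTop :=
    tendsto_atTop_mono' _ hVl (tendsto_natCast_atTop_atTop.const_mul_atTop hκ)
  have hdlim : Tendsto (fun n => d n / √(V n)) atTop (𝓝 0) := by
    have hy : Tendsto (fun n => √(2 * π * V n)) atTop atTop :=
      Real.tendsto_sqrt_atTop.comp (hVtop.const_mul_atTop (by positivity))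
    have hlog : Tendsto (fun y : ℝ => Real.log y / y) atTop (𝓝 0) := by
      have := Real.isLittleO_log_id_atTop.tendsto_div_nhds_zero
      exact this
    have h1 := ((hlog.comp hy).mul (hΛ.inv₀ hl.ne')).mul_const (√(2 * π))
    simp only [zero_mul] at h1
    refine h1.congr' ?_
    filter_upwards [hC, hVpos, hΛpos] with n hC hVpos hΛpos
    have hΛ0 : 0 < Λ n := by linarith
    have e : C n + ∑ i ∈ Finset.range n, gfun m (Λ n * h i)
        = Λ n * ∑ i ∈ Finset.range n, h i * (pf m (Λ n * h i) - qf m (Λ n * h i) - m) := by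
      rw [← hC, ← Finset.sum_add_distrib, Finset.mul_sum]
      refine Finset.sum_congr rfl fun i _ => ?_
      unfold rf; ring
    have e2 : d n = Real.log (√(2 * π * V n)) / Λ n := by
      simp only [hd]
      rw [hA, e, sub_div, mul_div_cancel_left₀ _ hΛ0.ne']; ring
    have hsV : 0 < √(V n) := Real.sqrt_pos.2 hVpos
    have hs2 : 0 < √(2 * π) := Real.sqrt_pos.2 (by positivity)
    simp only [Function.comp]
    rw [e2]
    rw [Real.sqrt_mul (by positivity) (V n)]
    field_simp
  have hkey := key_limit (fun n i => pf m (Λ n * h i)) (fun n i => qf m (Λ n * h i)) h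
    (fun n i => (pf_pos hm _).le) (fun n i => (qf_pos hm _).le) (fun n i => pf_add_qf hm _)
    V d hV K κ hK hκ h3 hVl hVu hsin hdlim
  have hbr := breiman (fun n => nuM m (Λ n) (√(2 * π * V n)) (A n) n h) (by
    intro ψ hψ hψc
    refine (hkey ψ hψ hψc).congr fun n => ?_
    congr 1; funext u
    rw [nuM_charFun hm (Λ n) _ (A n) (d n) (Real.sqrt_nonneg _) n h rfl])
  have ht := tilt_limit _ hbr Λ l hΛ f hf hfc
  refine ht.congr' ?_
  filter_upwards [hVpos, hΛpos] with n hVpos hΛpos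
  have hΛ0 : 0 < Λ n := by linarith
  rw [nuM_integral hm _ _ _ (Real.sqrt_nonneg _), Finset.mul_sum]
  refine Finset.sum_congr rfl fun τ _ => ?_
  rw [Pcyl_eq hm (Λ n) n h τ, smul_eq_mul]
  have e1 : √(2 * π * V n) = Real.exp (C n + ∑ i ∈ Finset.range n, gfun m (Λ n * h i) - Λ n * A n) := by
    rw [hA n, mul_div_cancel₀ _ hΛ0.ne']
    rw [sub_sub_cancel, Real.exp_log]
    exact Real.sqrt_pos.2 (by positivity)
  rw [e1]
  have e2 : Real.exp (C n + ∑ i ∈ Finset.range n, gfun m (Λ n * h i) - Λ n * A n) * Real.exp (-(Λ n * (Hn m n h τ - A n)))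
    = Real.exp (C n) * Real.exp (∑ i ∈ Finset.range n, gfun m (Λ n * h i) - Λ n * Hn m n h τ) := by
    rw [← Real.exp_add, ← Real.exp_add]; congr 1; ring
  calc _ = Qcyl m (Λ n) n h τ * f (Hn m n h τ - A n) * (Real.exp (C n + ∑ i ∈ Finset.range n, gfun m (Λ n * h i) - Λ n * A n) * Real.exp (-(Λ n * (Hn m n h τ - A n)))) := by ring
    _ = _ := by rw [e2]; ring

end

noncomputable section

lemma mul_sinc_eq (t x : ℝ) : t * (x * Real.sinc (t * x)) = Real.sin (t * x) := by
  by_cases h : t * x = 0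
  · rw [h, ← mul_assoc, h]; simp
  · rw [Real.sinc_of_ne_zero h, ← mul_assoc, ← mul_div_assoc, mul_div_cancel_left₀ _ h]

lemma local_sine (c0 d0 : ℝ) (hcd : c0 < d0) (t0 : ℝ) :
    ∃ κ > 0, ∃ a b : ℚ, c0 ≤ a ∧ (a : ℝ) < b ∧ (b : ℝ) ≤ d0 ∧
      ∀ᶠ t in 𝓝 t0, ∀ x ∈ Ioo (a : ℝ) b, κ * t ^ 2 ≤ Real.sin (t * x) ^ 2 := by
  have hcount : (({0} : Set ℝ) ∪ range (fun k : ℤ => (k : ℝ) * π / t0)).Countable :=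
    (countable_singleton 0).union (countable_range _)
  obtain ⟨x0, hx0, hx0'⟩ := (hcount.dense_compl ℝ).exists_mem_open isOpen_Ioo (nonempty_Ioo.2 hcd)
  rw [mem_compl_iff, mem_union, not_or] at hx0
  obtain ⟨hx1, hx2⟩ := hx0
  have hx1' : x0 ≠ 0 := hx1
  have hF : 0 < (x0 * Real.sinc (t0 * x0)) ^ 2 := by
    have : x0 * Real.sinc (t0 * x0) ≠ 0 := by
      refine mul_ne_zero hx1' ?_
      by_cases h : t0 = 0
      · simp [h]
      · rw [Real.sinc_of_ne_zero (mul_ne_zero h hx1')]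
        refine div_ne_zero ?_ (mul_ne_zero h hx1')
        intro hs
        obtain ⟨k, hk⟩ := Real.sin_eq_zero_iff.1 hs
        apply hx2
        refine ⟨k, ?_⟩
        simp only
        rw [hk]; field_simp
    positivity
  set κ := (x0 * Real.sinc (t0 * x0)) ^ 2 / 2 with hκ
  have hκpos : 0 < κ := by positivity
  have hcont : Continuous (fun p : ℝ × ℝ => (p.2 * Real.sinc (p.1 * p.2)) ^ 2) := by
    have := Real.continuous_sinc
    fun_prop
  have hev : ∀ᶠ p in 𝓝 (t0, x0), κ < (p.2 * Real.sinc (p.1 * p.2)) ^ 2 :=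
    hcont.continuousAt.eventually (lt_mem_nhds (by simp only [hκ]; linarith))
  rw [nhds_prod_eq] at hev
  obtain ⟨pa, hpa, pb, hpb, hp⟩ := Filter.eventually_prod_iff.1 hev
  have hpb' := hpb.and (isOpen_Ioo.mem_nhds hx0')
  obtain ⟨l, u, hlu, hlu'⟩ := mem_nhds_iff_exists_Ioo_subset.1 hpb'
  obtain ⟨a, ha1, ha2⟩ := exists_rat_btwn (max_lt hlu.1 hx0'.1)
  obtain ⟨b, hb1, hb2⟩ := exists_rat_btwn (lt_min hlu.2 hx0'.2)
  have := max_lt_iff.1 ha1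
  have h2 := lt_min_iff.1 hb2
  refine ⟨κ, hκpos, a, b, this.2.le, ha2.trans hb1, h2.2.le, ?_⟩
  filter_upwards [hpa] with t ht x hx
  have hx3 : x ∈ Ioo l u := ⟨this.1.trans hx.1, hx.2.trans h2.1⟩
  have := hp ht (hlu' hx3).1
  simp only at this
  rw [← mul_sinc_eq, mul_pow]
  nlinarith [sq_nonneg t]

lemma pq_lower {m : ℝ} (hm : m ∈ Set.Ioo (-1 : ℝ) 1) (B : ℝ) :
    ∃ ρ > 0, ∀ y, |y| ≤ B → ρ ≤ 4 * pf m y * qf m y := by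
  by_cases hB : 0 ≤ B
  · have hc : Continuous (fun y => 4 * pf m y * qf m y) := by
      have := continuous_pf hm; have := continuous_qf hm; fun_prop
    obtain ⟨y0, -, hy0⟩ := (isCompact_Icc (a := -B) (b := B)).exists_isMinOn
      ⟨0, by constructor <;> linarith⟩ hc.continuousOn
    refine ⟨_, mul_pos (mul_pos four_pos (pf_pos hm y0)) (qf_pos hm y0), fun y hy => ?_⟩
    exact hy0 (abs_le.1 hy)
  · exact ⟨1, one_pos, fun y hy => absurd ((abs_nonneg y).trans hy) hB⟩

lemma sine_bound {m : ℝ} (hm : m ∈ Set.Ioo (-1 : ℝ) 1) (h : ℕ → ℝ) (Λ : ℕ → ℝ) (L : ℝ)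
    (hΛ : ∀ᶠ n in atTop, |Λ n| ≤ L) (c0 d0 : ℝ) (hcd : c0 < d0)
    (hfreq : ∀ a b : ℚ, c0 ≤ a → (a : ℝ) < b → (b : ℝ) ≤ d0 → ∃ δ > 0, ∀ᶠ n : ℕ in atTop,
      δ * n ≤ ∑ i ∈ Finset.range n, (Ioo (a : ℝ) b).indicator (fun _ => (1 : ℝ)) (h i))
    (T : ℝ) :
    ∃ κ > 0, ∀ᶠ n : ℕ in atTop, ∀ u, |u| ≤ T → κ * n * u ^ 2 ≤
      ∑ i ∈ Finset.range n, 4 * pf m (Λ n * h i) * qf m (Λ n * h i) * Real.sin (u * h i) ^ 2 := by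
  suffices H : ∃ κ > 0, ∀ᶠ n : ℕ in atTop, ∀ u ∈ Icc (-T) T, κ * n * u ^ 2 ≤
      ∑ i ∈ Finset.range n, 4 * pf m (Λ n * h i) * qf m (Λ n * h i) * Real.sin (u * h i) ^ 2 by
    obtain ⟨κ, hκ, H⟩ := H
    exact ⟨κ, hκ, H.mono fun n hn u hu => hn u (abs_le.1 hu)⟩
  refine IsCompact.induction_on (isCompact_Icc (a := -T) (b := T))
    (p := fun S => ∃ κ > 0, ∀ᶠ n : ℕ in atTop, ∀ u ∈ S, κ * n * u ^ 2 ≤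
      ∑ i ∈ Finset.range n, 4 * pf m (Λ n * h i) * qf m (Λ n * h i) * Real.sin (u * h i) ^ 2)
    ?_ ?_ ?_ ?_
  · exact ⟨1, one_pos, by simp⟩
  · rintro s t hst ⟨κ, hκ, H⟩
    exact ⟨κ, hκ, H.mono fun n hn u hu => hn u (hst hu)⟩
  · rintro s t ⟨κ, hκ, H⟩ ⟨κ', hκ', H'⟩
    refine ⟨min κ κ', lt_min hκ hκ', ?_⟩
    filter_upwards [H, H'] with n h1 h2 u hu
    have hn : (0 : ℝ) ≤ n := Nat.cast_nonneg n
    rcases hu with hu | hu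
    · refine le_trans ?_ (h1 u hu)
      gcongr; exact min_le_left _ _
    · refine le_trans ?_ (h2 u hu)
      gcongr; exact min_le_right _ _
  · intro t0 _
    obtain ⟨κ, hκ, a, b, hca, hab, hbd, hev⟩ := local_sine c0 d0 hcd t0
    obtain ⟨δ, hδ, hf⟩ := hfreq a b hca hab hbd
    obtain ⟨ρ, hρ, hpq⟩ := pq_lower hm (L * max |c0| |d0|)
    refine ⟨{t | ∀ x ∈ Ioo (a : ℝ) b, κ * t ^ 2 ≤ Real.sin (t * x) ^ 2},
      mem_nhdsWithin_of_mem_nhds hev, ρ * κ * δ, by positivity, ?_⟩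
    filter_upwards [hf, hΛ] with n hn hL u hu
    calc ρ * κ * δ * n * u ^ 2 = ρ * κ * u ^ 2 * (δ * n) := by ring
      _ ≤ ρ * κ * u ^ 2 * ∑ i ∈ Finset.range n, (Ioo (a : ℝ) b).indicator (fun _ => (1 : ℝ)) (h i) := by
          gcongr
      _ = ∑ i ∈ Finset.range n, ρ * κ * u ^ 2 * (Ioo (a : ℝ) b).indicator (fun _ => (1 : ℝ)) (h i) := by
          rw [Finset.mul_sum]
      _ ≤ _ := by
          refine Finset.sum_le_sum fun i _ => ?_
          have hp := pf_pos hm (Λ n * h i)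
          have hq := qf_pos hm (Λ n * h i)
          by_cases hi : h i ∈ Ioo (a : ℝ) b
          · rw [indicator_of_mem hi, mul_one]
            have h1 := hu (h i) hi
            have hb : |h i| ≤ max |c0| |d0| :=
              abs_le_max_abs_abs (hca.trans hi.1.le) (hi.2.le.trans hbd)
            have h2 := hpq (Λ n * h i) (by
              rw [abs_mul]
              exact mul_le_mul hL hb (abs_nonneg _) ((abs_nonneg _).trans hL))
            rw [mul_assoc]
            exact mul_le_mul h2 h1 (by positivity) (by positivity)
          · rw [indicator_of_notMem hi, mul_zero]
            positivity
end

noncomputable section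

lemma slln {Ω : Type*} [MeasurableSpace Ω] (P : Measure Ω)
    (X : ℕ → Ω → ℝ) (hXmeas : ∀ i, Measurable (X i))
    (hXindep : iIndepFun X P)
    (μ : Measure ℝ) (hXdist : ∀ i, Measure.map (X i) P = μ)
    (f : ℝ → ℝ) (hf : Measurable f) (hfi : Integrable f μ) :
    ∀ᵐ ω ∂P, Tendsto (fun n : ℕ => (∑ i ∈ Finset.range n, f (X i ω)) / n) atTop (𝓝 (∫ x, f x ∂μ)) := by
  have h1 := strong_law_ae_real (μ := P) (fun i => f ∘ X i) ?_ ?_ ?_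
  · have e : ∫ ω, (f ∘ X 0) ω ∂P = ∫ x, f x ∂μ := by
      rw [← hXdist 0, integral_map (hXmeas 0).aemeasurable hf.aestronglyMeasurable]; rfl
    rw [e] at h1
    exact h1
  · have : Integrable f (Measure.map (X 0) P) := by rw [hXdist 0]; exact hfi
    exact this.comp_measurable (hXmeas 0)
  · intro i j hij
    exact (hXindep.indepFun hij).comp hf hf
  · intro i
    refine IdentDistrib.comp ⟨(hXmeas i).aemeasurable, (hXmeas 0).aemeasurable, ?_⟩ hf
    rw [hXdist, hXdist]

variable {m : ℝ}

lemma rf_integrable (hm : m ∈ Set.Ioo (-1 : ℝ) 1) {μ : Measure ℝ}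
    (hi : Integrable (fun x : ℝ => |x|) μ) (l : ℝ) : Integrable (fun x => rf m (l * x)) μ := by
  refine Integrable.mono' (hi.const_mul (4 * |l|)) ?_ (ae_of_all _ fun x => ?_)
  · exact ((continuous_rf hm).comp (continuous_const.mul continuous_id)).aestronglyMeasurable
  · have := abs_rf_le hm (l * x)
    rw [Real.norm_eq_abs]
    rw [abs_mul] at this; linarith

lemma gfun_integrable (hm : m ∈ Set.Ioo (-1 : ℝ) 1) {μ : Measure ℝ}
    (hi : Integrable (fun x : ℝ => |x|) μ) (l : ℝ) : Integrable (fun x => gfun m (l * x)) μ := by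
  refine Integrable.mono' (hi.const_mul (2 * |l|)) ?_ (ae_of_all _ fun x => ?_)
  · exact ((continuous_gfun hm).comp (continuous_const.mul continuous_id)).aestronglyMeasurable
  · have := abs_gfun_le hm (l * x)
    rw [Real.norm_eq_abs]
    rw [abs_mul] at this; linarith

def dG (m l x : ℝ) : ℝ := (pf m (l * x) - qf m (l * x) - m) * x

lemma dG_cont (hm : m ∈ Set.Ioo (-1 : ℝ) 1) (l : ℝ) : Continuous (dG m l) := by
  have := continuous_pf hm; have := continuous_qf hm
  unfold dG
  fun_prop

lemma dG_bound (hm : m ∈ Set.Ioo (-1 : ℝ) 1) (l x : ℝ) : ‖dG m l x‖ ≤ 2 * |x| := by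
  unfold dG
  rw [norm_mul, Real.norm_eq_abs, Real.norm_eq_abs]
  exact mul_le_mul_of_nonneg_right (abs_gderiv_le hm _) (abs_nonneg _)

lemma dG_integrable (hm : m ∈ Set.Ioo (-1 : ℝ) 1) {μ : Measure ℝ}
    (hi : Integrable (fun x : ℝ => |x|) μ) (l : ℝ) : Integrable (dG m l) μ :=
  Integrable.mono' (hi.const_mul 2) (dG_cont hm l).aestronglyMeasurable
    (ae_of_all _ fun x => dG_bound hm l x)

lemma hasDerivAt_Gf (hm : m ∈ Set.Ioo (-1 : ℝ) 1) {μ : Measure ℝ}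
    (hi : Integrable (fun x : ℝ => |x|) μ) (l : ℝ) :
    HasDerivAt (Gf μ m) (∫ x, dG m l x ∂μ) l := by
  refine (hasDerivAt_integral_of_dominated_loc_of_deriv_le (bound := fun x => 2 * |x|)
    (F := fun l x => gfun m (l * x)) (F' := fun l x => dG m l x) (s := univ) univ_mem
    (Eventually.of_forall fun l => (gfun_integrable hm hi l).aestronglyMeasurable)
    (gfun_integrable hm hi l) (dG_cont hm l).aestronglyMeasurable
    (ae_of_all _ fun x y _ => dG_bound hm y x) (hi.const_mul 2)
    (ae_of_all _ fun x y _ => ?_)).2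
  have h1 := (hasDerivAt_gfun hm (y * x)).comp y ((hasDerivAt_id y).mul_const x)
  simp only [one_mul] at h1
  exact h1

lemma phi_eq (hm : m ∈ Set.Ioo (-1 : ℝ) 1) {μ : Measure ℝ}
    (hi : Integrable (fun x : ℝ => |x|) μ) (c atil ltil : ℝ)
    (hGstar : Gstar μ m atil = c) (hGderiv : deriv (Gf μ m) ltil = atil) :
    ∫ x, rf m (ltil * x) ∂μ = c := by
  have ha : ∫ x, dG m ltil x ∂μ = atil := by rw [← hGderiv, (hasDerivAt_Gf hm hi ltil).deriv]
  have e1 : ∫ x, rf m (ltil * x) ∂μ = ltil * atil - Gf μ m ltil := by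
    have : ∀ x, rf m (ltil * x) = ltil * dG m ltil x - gfun m (ltil * x) := by
      intro x; unfold rf dG; ring
    simp_rw [this]
    rw [integral_sub ((dG_integrable hm hi _).const_mul _) (gfun_integrable hm hi _),
      integral_const_mul, ha]
    rfl
  have h2 : ∀ l, l * atil - Gf μ m l ≤ ltil * atil - Gf μ m ltil := by
    intro l
    have : ∫ x, (gfun m (ltil * x) + (l - ltil) * dG m ltil x) ∂μ ≤ ∫ x, gfun m (l * x) ∂μ := by
      refine integral_mono ((gfun_integrable hm hi _).add ((dG_integrable hm hi _).const_mul _))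
        (gfun_integrable hm hi _) fun x => ?_
      have := gfun_tangent hm (ltil * x) (l * x)
      unfold dG
      simp only
      linarith
    rw [integral_add (gfun_integrable hm hi _) ((dG_integrable hm hi _).const_mul _),
      integral_const_mul, ha] at this
    unfold Gf
    linarith
  rw [e1, ← hGstar]
  unfold Gstar
  apply le_antisymm
  · exact le_ciSup (f := fun l => l * atil - Gf μ m l) ⟨_, by rintro _ ⟨l, rfl⟩; exact h2 l⟩ ltil
  · exact ciSup_le h2

lemma phi_lt (hm : m ∈ Set.Ioo (-1 : ℝ) 1) {μ : Measure ℝ} (hA : Assumption1 μ) {a b : ℝ}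
    (ha : 0 ≤ a) (hab : a < b) :
    ∫ x, rf m (a * x) ∂μ < ∫ x, rf m (b * x) ∂μ := by
  have hi := hA.intAbs
  have h0 : 0 < ∫ x, (rf m (b * x) - rf m (a * x)) ∂μ := by
    rw [integral_pos_iff_support_of_nonneg]
    · obtain ⟨c, d, p, hcd, hp, hd⟩ := hA.densityLB
      have h1 := hd (Icc c d \ {0}) sdiff_subset (measurableSet_Icc.diff (measurableSet_singleton _))
      have h2 : volume (Icc c d \ {0}) = ENNReal.ofReal (d - c) := by
        rw [measure_sdiff_null (by simp), Real.volume_Icc]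
      rw [h2] at h1
      refine lt_of_lt_of_le ?_ (h1.trans (measure_mono ?_))
      · exact ENNReal.mul_pos (ENNReal.ofReal_pos.2 hp).ne'
          (ENNReal.ofReal_pos.2 (sub_pos.2 hcd)).ne'
      · rintro x ⟨_, hx⟩
        exact (sub_pos.2 (rf_lt hm ha hab hx)).ne'
    · intro x
      exact sub_nonneg.2 (by
        by_cases hx : x = 0
        · simp [hx]
        · exact (rf_lt hm ha hab hx).le)
    · exact (rf_integrable hm hi _).sub (rf_integrable hm hi _)
  rw [integral_sub (rf_integrable hm hi _) (rf_integrable hm hi _)] at h0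
  linarith

lemma freq_pos {μ : Measure ℝ} [IsFiniteMeasure μ] {c d p : ℝ} (hp : 0 < p)
    (hd : ∀ s : Set ℝ, s ⊆ Set.Icc c d → MeasurableSet s → ENNReal.ofReal p * volume s ≤ μ s)
    (a b : ℝ) (ha : c ≤ a) (hab : a < b) (hb : b ≤ d) :
    0 < ∫ x, (Ioo a b).indicator (fun _ => (1 : ℝ)) x ∂μ := by
  rw [integral_indicator measurableSet_Ioo, setIntegral_const, smul_eq_mul, mul_one]
  have h1 := hd (Ioo a b) (fun x hx => ⟨ha.trans hx.1.le, hx.2.le.trans hb⟩) measurableSet_Ioo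
  rw [Real.volume_Ioo] at h1
  refine ENNReal.toReal_pos (ne_of_gt (lt_of_lt_of_le ?_ h1)) (measure_ne_top _ _)
  exact ENNReal.mul_pos (ENNReal.ofReal_pos.2 hp).ne' (ENNReal.ofReal_pos.2 (sub_pos.2 hab)).ne'

/-- empirical version of phi -/
def phiN (m : ℝ) (n : ℕ) (l : ℝ) (h : ℕ → ℝ) : ℝ := ∑ i ∈ Finset.range n, rf m (l * h i)

lemma phiN_mono (hm : m ∈ Set.Ioo (-1 : ℝ) 1) (n : ℕ) (h : ℕ → ℝ) {a b : ℝ} (ha : 0 ≤ a)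
    (hab : a ≤ b) : phiN m n a h ≤ phiN m n b h :=
  Finset.sum_le_sum fun i _ => by
    rcases hab.eq_or_lt with rfl | hab
    · exact le_rfl
    · by_cases hx : h i = 0
      · simp [hx]
      · exact (rf_lt hm ha hab hx).le

lemma phiN_cont (hm : m ∈ Set.Ioo (-1 : ℝ) 1) (n : ℕ) (h : ℕ → ℝ) :
    Continuous (fun l => phiN m n l h) := by
  have := continuous_rf hm
  unfold phiN
  fun_prop

def LamSet (m B : ℝ) (n : ℕ) (C : ℝ) (h : ℕ → ℝ) : Set ℝ := {l | l ∈ Icc 0 B ∧ phiN m n l h ≤ C}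

def Lam (m B : ℝ) (n : ℕ) (C : ℝ) (h : ℕ → ℝ) : ℝ := sSup (LamSet m B n C h)

lemma LamSet_bdd (m B : ℝ) (n : ℕ) (C : ℝ) (h : ℕ → ℝ) : BddAbove (LamSet m B n C h) :=
  ⟨B, fun _ hx => hx.1.2⟩

lemma LamSet_compact (hm : m ∈ Set.Ioo (-1 : ℝ) 1) (B : ℝ) (n : ℕ) (C : ℝ) (h : ℕ → ℝ) :
    IsCompact (LamSet m B n C h) := by
  refine isCompact_Icc.inter_right ?_
  exact isClosed_le (phiN_cont hm n h) continuous_const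

lemma Lam_ge_iff (hm : m ∈ Set.Ioo (-1 : ℝ) 1) (B : ℝ) (n : ℕ) (C : ℝ) (h : ℕ → ℝ) {a : ℝ}
    (ha : 0 < a) (haB : a ≤ B) : a ≤ Lam m B n C h ↔ phiN m n a h ≤ C := by
  constructor
  · intro hle
    have hne : (LamSet m B n C h).Nonempty := by
      by_contra hne
      rw [not_nonempty_iff_eq_empty] at hne
      unfold Lam at hle
      rw [hne, Real.sSup_empty] at hle
      linarith
    have := (LamSet_compact hm B n C h).sSup_mem hne
    exact (phiN_mono hm n h ha.le hle).trans this.2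
  · intro hle
    exact le_csSup (LamSet_bdd _ _ _ _ _) ⟨⟨ha.le, haB⟩, hle⟩

lemma Lam_nonneg (m B : ℝ) (n : ℕ) (C : ℝ) (h : ℕ → ℝ) : 0 ≤ Lam m B n C h :=
  Real.sSup_nonneg fun _ hx => hx.1.1

lemma Lam_le (m B : ℝ) (hB : 0 ≤ B) (n : ℕ) (C : ℝ) (h : ℕ → ℝ) : Lam m B n C h ≤ B :=
  Real.sSup_le (fun _ hx => hx.1.2) hB

lemma phiN_measurable (hm : m ∈ Set.Ioo (-1 : ℝ) 1) (n : ℕ) (l : ℝ) : Measurable (phiN m n l) := by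
  unfold phiN
  refine Finset.measurable_sum _ fun i _ => ?_
  have h1 : Measurable (fun h : ℕ → ℝ => l * h i) := by fun_prop
  exact (continuous_rf hm).measurable.comp h1

lemma Lam_measurable (hm : m ∈ Set.Ioo (-1 : ℝ) 1) (B : ℝ) (hB : 0 < B) (n : ℕ)
    (C : (ℕ → ℝ) → ℝ) (hC : Measurable C) : Measurable (fun h => Lam m B n (C h) h) := by
  refine measurable_of_Ici fun a => ?_
  by_cases ha : a ≤ 0
  · convert MeasurableSet.univ
    rw [eq_univ_iff_forall]
    intro h; exact ha.trans (Lam_nonneg _ _ _ _ _)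
  · by_cases haB : a ≤ B
    · have : (fun h => Lam m B n (C h) h) ⁻¹' Ici a = {h | phiN m n a h ≤ C h} := by
        ext h
        exact Lam_ge_iff hm B n (C h) h (not_le.1 ha) haB
      rw [this]
      exact measurableSet_le (phiN_measurable hm n a) hC
    · convert MeasurableSet.empty
      rw [eq_empty_iff_forall_notMem]
      intro h hh
      exact haB (le_trans hh (Lam_le m B hB.le n (C h) h))

lemma Lam_root (hm : m ∈ Set.Ioo (-1 : ℝ) 1) (B : ℝ) (n : ℕ) (C : ℝ) (h : ℕ → ℝ) {a b : ℝ}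
    (ha : 0 < a) (hab : a < b) (hbB : b ≤ B) (h1 : phiN m n a h < C) (h2 : C < phiN m n b h) :
    a ≤ Lam m B n C h ∧ Lam m B n C h ≤ b ∧ phiN m n (Lam m B n C h) h = C := by
  have g1 : a ≤ Lam m B n C h := (Lam_ge_iff hm B n C h ha (hab.le.trans hbB)).2 h1.le
  have g2 : Lam m B n C h ≤ b := by
    by_contra hh
    rw [not_le] at hh
    have := (Lam_ge_iff hm B n C h (ha.trans hab) hbB).1 hh.le
    linarith
  refine ⟨g1, g2, le_antisymm ?_ ?_⟩
  · exact (Lam_ge_iff hm B n C h (ha.trans_le g1) (g2.trans hbB)).1 le_rfl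
  · obtain ⟨x, hx, hxe⟩ := intermediate_value_Icc hab.le (phiN_cont hm n h).continuousOn ⟨h1.le, h2.le⟩
    simp only at hxe
    have hx0 : 0 < x := ha.trans_le hx.1
    have := (Lam_ge_iff hm B n C h hx0 (hx.2.trans hbB)).2 hxe.le
    calc C = phiN m n x h := hxe.symm
      _ ≤ _ := phiN_mono hm n h hx0.le this

end

noncomputable section

lemma ev_le {S : ℕ → ℝ} {L K : ℝ} (h : Tendsto (fun n : ℕ => S n / n) atTop (𝓝 L)) (hK : L < K) :
    ∀ᶠ n : ℕ in atTop, S n ≤ K * n := by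
  filter_upwards [h.eventually (gt_mem_nhds hK), eventually_gt_atTop 0] with n h1 h2
  have : (0 : ℝ) < n := Nat.cast_pos.2 h2
  rw [div_lt_iff₀ this] at h1; exact h1.le

lemma ev_ge {S : ℕ → ℝ} {L K : ℝ} (h : Tendsto (fun n : ℕ => S n / n) atTop (𝓝 L)) (hK : K < L) :
    ∀ᶠ n : ℕ in atTop, K * n ≤ S n := by
  filter_upwards [h.eventually (lt_mem_nhds hK), eventually_gt_atTop 0] with n h1 h2
  have : (0 : ℝ) < n := Nat.cast_pos.2 h2
  rw [lt_div_iff₀ this] at h1; exact h1.le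

lemma ev_lt {S S' : ℕ → ℝ} {L L' : ℝ} (h : Tendsto (fun n : ℕ => S n / n) atTop (𝓝 L))
    (h' : Tendsto (fun n : ℕ => S' n / n) atTop (𝓝 L')) (hK : L < L') :
    ∀ᶠ n : ℕ in atTop, S n < S' n := by
  filter_upwards [h.eventually_lt h' hK, eventually_gt_atTop 0] with n h1 h2
  have : (0 : ℝ) < n := Nat.cast_pos.2 h2
  exact (div_lt_div_iff_of_pos_right this).1 h1

def Vn (m : ℝ) (n : ℕ) (l : ℝ) (h : ℕ → ℝ) : ℝ :=
  ∑ i ∈ Finset.range n, 4 * pf m (l * h i) * qf m (l * h i) * h i ^ 2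

def An (m B : ℝ) (C : ℕ → (ℕ → ℝ) → ℝ) (n : ℕ) (h : ℕ → ℝ) : ℝ :=
  (C n h + ∑ i ∈ Finset.range n, gfun m (Lam m B n (C n h) h * h i)
    - Real.log √(2 * π * Vn m n (Lam m B n (C n h) h) h)) / Lam m B n (C n h) h

lemma An_measurable {m : ℝ} (hm : m ∈ Set.Ioo (-1 : ℝ) 1) (B : ℝ) (hB : 0 < B)
    (C : ℕ → (ℕ → ℝ) → ℝ) (hC : ∀ n, Measurable (C n)) (n : ℕ) : Measurable (An m B C n) := by
  have hL := Lam_measurable hm B hB n (C n) (hC n)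
  have hp := (continuous_pf hm).measurable
  have hq := (continuous_qf hm).measurable
  have hg := (continuous_gfun hm).measurable
  have hLi : ∀ i : ℕ, Measurable (fun h : ℕ → ℝ => Lam m B n (C n h) h * h i) := fun i =>
    hL.mul (measurable_pi_apply i)
  have hV : Measurable (fun h : ℕ → ℝ => Vn m n (Lam m B n (C n h) h) h) := by
    unfold Vn
    refine Finset.measurable_sum _ fun i _ => ?_
    have h1 := hp.comp (hLi i)
    have h2 := hq.comp (hLi i)
    have h3 : Measurable (fun h : ℕ → ℝ => h i ^ 2) := by fun_prop
    exact ((h1.const_mul 4).mul h2).mul h3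
  have hG : Measurable (fun h : ℕ → ℝ => ∑ i ∈ Finset.range n, gfun m (Lam m B n (C n h) h * h i)) :=
    Finset.measurable_sum _ fun i _ => hg.comp (hLi i)
  unfold An
  exact (((hC n).add hG).sub (Real.measurable_log.comp
    (Real.continuous_sqrt.measurable.comp (hV.const_mul (2 * π))))).div hL

end

/-- Theorem on universal asymptotics of the conditional kernels:
there exists an `h`-measurable centering `A_n(h)` such that, almost surely, the kernels
`K_n(h,·) = e^{C_n(h)} P_σ(H_n(h,σ) − A_n(h) ∈ ·)` converge vaguely to `e^{−λ̃x}dx`;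
vague convergence is expressed through integrals of continuous compactly supported
functions, and `∫ f dK_n = e^{C_n(h)} Σ_τ P_σ([τ]) f(H_n(h,τ) − A_n(h))`. -/
theorem stmt1 {Ω : Type*} [MeasurableSpace Ω] (P : Measure Ω) [IsProbabilityMeasure P]
    (X : ℕ → Ω → ℝ) (hXmeas : ∀ i, Measurable (X i))
    (hXindep : iIndepFun X P)
    (μ : Measure ℝ) (hXdist : ∀ i, Measure.map (X i) P = μ)
    (hAss : Assumption1 μ) (m : ℝ) (hm : m ∈ Set.Ioo (-1 : ℝ) 1)
    (c : ℝ) (hc : c ∈ Set.Ioo 0 (gammaBar μ m))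
    (atil ltil : ℝ) (hatil : atil ∈ Set.Ioo 0 (sigmaBar μ m)) (hltil : 0 < ltil)
    (hGstar : Gstar μ m atil = c) (hGderiv : deriv (Gf μ m) ltil = atil)
    (C : ℕ → (ℕ → ℝ) → ℝ) (hCmeas : ∀ n, Measurable (C n))
    (hCmem : ∀ᵐ ω ∂P, ∀ᶠ n in atTop,
      C n (fun i => X i ω) ∈ Set.Ioo 0 (GammaN m n (fun i => X i ω)))
    (hCconv : ∀ᵐ ω ∂P,
      Tendsto (fun n => C n (fun i => X i ω) / n) atTop (nhds c)) :
    ∃ A : ℕ → (ℕ → ℝ) → ℝ, (∀ n, Measurable (A n)) ∧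
      ∀ᵐ ω ∂P, ∀ f : ℝ → ℝ, Continuous f → HasCompactSupport f →
        Tendsto (fun n =>
            Real.exp (C n (fun i => X i ω)) *
              ∑ τ : Fin n → Bool, Pcyl m n τ *
                f (Hn m n (fun i => X i ω) τ - A n (fun i => X i ω)))
          atTop
          (nhds (∫ x : ℝ, f x * Real.exp (-(ltil * x)))) := by
  have hB : 0 < 2 * ltil := by positivity
  refine ⟨An m (2 * ltil) C, An_measurable hm _ hB C hCmeas, ?_⟩
  haveI := hAss.isProb
  obtain ⟨c0, d0, p2, hcd, hp2, hd⟩ := hAss.densityLB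
  have E1 : ∀ᵐ ω ∂P, ∀ a b : ℚ, Tendsto (fun n : ℕ => (∑ i ∈ Finset.range n,
      (Ioo (a : ℝ) b).indicator (fun _ => (1 : ℝ)) (X i ω)) / n) atTop
      (𝓝 (∫ x, (Ioo (a : ℝ) b).indicator (fun _ => (1 : ℝ)) x ∂μ)) := by
    rw [ae_all_iff]; intro a
    rw [ae_all_iff]; intro b
    exact slln P X hXmeas hXindep μ hXdist _ (measurable_const.indicator measurableSet_Ioo)
      ((integrable_const 1).indicator measurableSet_Ioo)
  have E2 := slln P X hXmeas hXindep μ hXdist (fun x => x ^ 2) (by fun_prop) hAss.intSq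
  have E3 := slln P X hXmeas hXindep μ hXdist (fun x => |x| ^ 3) (by fun_prop) hAss.intCube
  have E4 : ∀ᵐ ω ∂P, ∀ q : ℚ, Tendsto (fun n : ℕ => phiN m n q (fun i => X i ω) / n) atTop
      (𝓝 (∫ x, rf m (q * x) ∂μ)) := by
    rw [ae_all_iff]; intro q
    exact slln P X hXmeas hXindep μ hXdist (fun x => rf m (q * x))
      ((continuous_rf hm).comp (continuous_const.mul continuous_id)).measurable
      (rf_integrable hm hAss.intAbs _)
  have hphi := phi_eq hm hAss.intAbs c atil ltil hGstar hGderiv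
  filter_upwards [E1, E2, E3, E4, hCconv] with ω e1 e2 e3 e4 hcc f hf hfc
  set h : ℕ → ℝ := fun i => X i ω with hh
  have root : ∀ a b : ℝ, 0 < a → a < ltil → ltil < b → b < 2 * ltil →
      ∀ᶠ n in atTop, a ≤ Lam m (2 * ltil) n (C n h) h ∧ Lam m (2 * ltil) n (C n h) h ≤ b ∧
        phiN m n (Lam m (2 * ltil) n (C n h) h) h = C n h := by
    intro a b ha hal hlb hb
    obtain ⟨q1, hq1, hq1'⟩ := exists_rat_btwn hal
    obtain ⟨q2, hq2, hq2'⟩ := exists_rat_btwn hlb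
    have l1 := phi_lt hm hAss (ha.trans hq1).le hq1'
    have l2 := phi_lt hm hAss hltil.le hq2
    rw [hphi] at l1 l2
    filter_upwards [ev_lt (e4 q1) hcc l1, ev_lt hcc (e4 q2) l2] with n h1 h2
    have := Lam_root hm (2 * ltil) n (C n h) h (ha.trans hq1) (hq1'.trans hq2) (hq2'.trans hb).le h1 h2
    exact ⟨hq1.le.trans this.1, this.2.1.trans hq2'.le, this.2.2⟩
  have hΛ : Tendsto (fun n => Lam m (2 * ltil) n (C n h) h) atTop (𝓝 ltil) := by
    rw [tendsto_order]
    constructor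
    · intro a ha
      have h1 : max a (ltil / 2) < ltil := max_lt ha (by linarith)
      obtain ⟨a', h2, h3⟩ := exists_between h1
      have h4 := max_lt_iff.1 h2
      filter_upwards [root a' (3 / 2 * ltil) (by linarith [h4.2]) h3 (by linarith) (by linarith)] with n hn
      exact h4.1.trans_le hn.1
    · intro b hb
      have h1 : ltil < min b (2 * ltil) := lt_min hb (by linarith)
      obtain ⟨b', h2, h3⟩ := exists_between h1
      have h4 := lt_min_iff.1 h3
      filter_upwards [root (ltil / 2) b' (by linarith) (by linarith) h2 h4.2] with n hn
      exact hn.2.1.trans_lt h4.1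
  have hroot : ∀ᶠ n in atTop, phiN m n (Lam m (2 * ltil) n (C n h) h) h = C n h :=
    (root (ltil / 2) (3 / 2 * ltil) (by linarith) (by linarith) (by linarith) (by linarith)).mono
      fun n hn => hn.2.2
  have hsine := fun T : ℝ => sine_bound hm h (fun n => Lam m (2 * ltil) n (C n h) h) (2 * ltil)
    (Eventually.of_forall fun n => by
      rw [abs_of_nonneg (Lam_nonneg _ _ _ _ _)]
      exact Lam_le _ _ hB.le _ _ _) c0 d0 hcd
    (fun a b hca hab hbd => by
      have hpos := freq_pos hp2 hd a b hca hab hbd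
      exact ⟨_, half_pos hpos, ev_ge (e1 a b) (half_lt_self hpos)⟩) T
  have hsq : 0 ≤ ∫ x, x ^ 2 ∂μ := integral_nonneg fun x => sq_nonneg x
  have hcu : 0 ≤ ∫ x, |x| ^ 3 ∂μ := integral_nonneg fun x => by positivity
  set K : ℝ := ∫ x, x ^ 2 ∂μ + ∫ x, |x| ^ 3 ∂μ + 1 with hK
  obtain ⟨κ, hκ, hs1⟩ := hsine 1
  refine det_limit hm h (fun n => Lam m (2 * ltil) n (C n h) h) (fun n => C n h)
    (fun n => An m (2 * ltil) C n h) (fun n => Vn m n (Lam m (2 * ltil) n (C n h) h) h) ltil hltil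
    hΛ (fun n => rfl) hroot (fun n => rfl) K κ (by linarith) hκ (ev_le e3 (by linarith)) ?_ ?_
    (fun T _ => hsine T) f hf hfc
  · filter_upwards [hs1] with n hn
    have h1 := hn 1 (by simp)
    simp only [one_pow, mul_one, one_mul] at h1
    refine h1.trans (Finset.sum_le_sum fun i _ => ?_)
    have hp := pf_pos hm (Lam m (2 * ltil) n (C n h) h * h i)
    have hq := qf_pos hm (Lam m (2 * ltil) n (C n h) h * h i)
    have : Real.sin (h i) ^ 2 ≤ h i ^ 2 := sq_le_sq.2 Real.abs_sin_le_abs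
    gcongr
  · filter_upwards [ev_le e2 (show _ < K by linarith)] with n hn
    refine le_trans (Finset.sum_le_sum fun i _ => ?_) hn
    have hpq := pf_add_qf hm (Lam m (2 * ltil) n (C n h) h * h i)
    set p := pf m (Lam m (2 * ltil) n (C n h) h * h i)
    set q := qf m (Lam m (2 * ltil) n (C n h) h * h i)
    have : 4 * p * q ≤ 1 := by nlinarith [sq_nonneg (p - q)]
    exact mul_le_of_le_one_left (sq_nonneg _) this
end
end

section
/- Fix m ∈ (−1,1), n ∈ ℕ and h ∈ ℝ^n with h ≠ 0. Then M_n(h,·) is continuous and infinitely differentiable in λ, and: (1) M_n(h,0) = M'_n(h,0) = 0; (2) M''_n(h,λ) > 0 for all λ ∈ ℝ; (3) {M'_n(h,λ) : λ ∈ (0,∞)} = (0, Σ_n(h)); (4) there exists a continuous strictly increasing function Λ_n(h,·) : [0, Σ_n(h)) → [0,∞) such that M'_n(h, Λ_n(h,a)) = a for all a ∈ [0,Σ_n(h)), with Λ_n(h,0) = 0 and Λ_n(h, (0,Σ_n(h))) = (0,∞). -/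
open MeasureTheory Real Filter Set
open scoped Topology BigOperators

noncomputable section

/-- `M_n(h,λ) = Σ_{i=1}^n g(λ h_i)` for `h ∈ ℝ^n`. -/
def Mn {n : ℕ} (m : ℝ) (h : Fin n → ℝ) (lam : ℝ) : ℝ :=
  ∑ i : Fin n, gfun m (lam * h i)

/-- `Σ_n(h) = −m Σ_{i=1}^n h_i + Σ_{i=1}^n |h_i|`. -/
def SigmaN {n : ℕ} (m : ℝ) (h : Fin n → ℝ) : ℝ :=
  -m * ∑ i : Fin n, h i + ∑ i : Fin n, |h i|

lemma aux_abs (F : ℝ → ℝ) (S : ℝ) (hc : Continuous F) (hF : StrictMono F) (h0 : F 0 = 0)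
    (hl : Tendsto F atTop (𝓝 S)) :
    F '' (Set.Ioi 0) = Set.Ioo 0 S ∧
    (∃ Lam : ℝ → ℝ,
      ContinuousOn Lam (Set.Ico 0 S) ∧
      StrictMonoOn Lam (Set.Ico 0 S) ∧
      (∀ a ∈ Set.Ico 0 S, 0 ≤ Lam a ∧ F (Lam a) = a) ∧
      Lam 0 = 0 ∧ Lam '' (Set.Ioo 0 S) = Set.Ioi 0) := by
  have hlt : ∀ x, F x < S := fun x =>
    lt_of_lt_of_le (hF (lt_add_one x)) (hF.monotone.ge_of_tendsto hl _)
  have hsurj : ∀ a ∈ Set.Ico 0 S, ∃ x, F x = a := by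
    intro a ha
    obtain ⟨y, hy⟩ := (hl.eventually (lt_mem_nhds ha.2)).exists
    exact mem_range_of_exists_le_of_exists_ge hc ⟨0, by rw [h0]; exact ha.1⟩ ⟨y, hy.le⟩
  have himg : F '' (Set.Ioi 0) = Set.Ioo 0 S := by
    ext a
    constructor
    · rintro ⟨x, hx, rfl⟩
      exact ⟨by rw [← h0]; exact hF hx, hlt x⟩
    · intro ha
      obtain ⟨x, rfl⟩ := hsurj a ⟨ha.1.le, ha.2⟩
      refine ⟨x, ?_, rfl⟩
      have := ha.1
      rw [← h0] at this
      exact hF.lt_iff_lt.1 this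
  have hG : ∀ x, Function.invFun F (F x) = x := Function.leftInverse_invFun hF.injective
  have hFG : ∀ a ∈ Set.Ico 0 S, F (Function.invFun F a) = a := fun a ha =>
    Function.invFun_eq (hsurj a ha)
  refine ⟨himg, Function.invFun F, ?_, ?_, ?_, ?_, ?_⟩
  · have hemb := hF.isEmbedding_of_ordConnected (isPreconnected_range hc).ordConnected
    rw [hemb.isInducing.continuousOn_iff]
    exact continuousOn_id.congr hFG
  · intro a ha b hb hab
    rw [← hF.lt_iff_lt, hFG a ha, hFG b hb]
    exact hab
  · intro a ha
    refine ⟨?_, hFG a ha⟩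
    rw [← hF.le_iff_le, hFG a ha, h0]
    exact ha.1
  · simpa [h0] using hG 0
  · rw [← himg, image_image]
    simp [hG]

def gd (m x : ℝ) : ℝ := 1 - m - (1 - m) / ((1 + m) / 2 * Real.exp (2 * x) + (1 - m) / 2)

def gdd (m x : ℝ) : ℝ := (1 - m) * ((1 + m) / 2 * (Real.exp (2 * x) * 2)) /
  ((1 + m) / 2 * Real.exp (2 * x) + (1 - m) / 2) ^ 2

lemma den_pos (m : ℝ) (hm : m ∈ Set.Ioo (-1 : ℝ) 1) (x : ℝ) :
    0 < (1 + m) / 2 * Real.exp (2 * x) + (1 - m) / 2 := by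
  have h1 : 0 < 1 + m := by linarith [hm.1]
  have h2 : 0 < 1 - m := by linarith [hm.2]
  positivity

lemma gfun_eq_s6 (m : ℝ) (hm : m ∈ Set.Ioo (-1 : ℝ) 1) : gfun m =
    fun x => -(x * (1 + m)) + Real.log ((1 + m) / 2 * Real.exp (2 * x) + (1 - m) / 2) := by
  funext x
  rw [gfun, ← Real.log_exp (-(x * (1 + m))), ← Real.log_mul (Real.exp_ne_zero _) (den_pos m hm x).ne',
    Real.log_exp]
  congr 1
  rw [show x * (1 - m) = -(x * (1 + m)) + 2 * x by ring, Real.exp_add]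
  ring

lemma hasDerivAt_den (m x : ℝ) :
    HasDerivAt (fun x => (1 + m) / 2 * Real.exp (2 * x) + (1 - m) / 2)
      ((1 + m) / 2 * (Real.exp (2 * x) * 2)) x := by
  have h1 : HasDerivAt (fun x : ℝ => 2 * x) 2 x := by simpa using (hasDerivAt_id x).const_mul 2
  exact ((h1.exp).const_mul _).add_const _

lemma hasDerivAt_g (m : ℝ) (hm : m ∈ Set.Ioo (-1 : ℝ) 1) (x : ℝ) :
    HasDerivAt (gfun m) (gd m x) x := by
  rw [gfun_eq_s6 m hm]
  have hp := (den_pos m hm x).ne'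
  have h1 := (((hasDerivAt_id x).mul_const (1 + m)).neg).add ((hasDerivAt_den m x).log hp)
  refine HasDerivAt.congr_deriv h1 ?_
  unfold gd
  have e : (1 + m) / 2 * (Real.exp (2 * x) * 2) =
      2 * ((1 + m) / 2 * Real.exp (2 * x) + (1 - m) / 2) - (1 - m) := by ring
  rw [e]
  generalize (1 + m) / 2 * Real.exp (2 * x) + (1 - m) / 2 = D at hp
  field_simp
  ring

lemma hasDerivAt_gd (m : ℝ) (hm : m ∈ Set.Ioo (-1 : ℝ) 1) (x : ℝ) :
    HasDerivAt (gd m) (gdd m x) x := by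
  have hp := (den_pos m hm x).ne'
  have h1 := ((hasDerivAt_const x (1 - m)).div (hasDerivAt_den m x) hp).const_sub (1 - m)
  refine HasDerivAt.congr_deriv h1 ?_
  unfold gdd
  ring

lemma gdd_pos (m : ℝ) (hm : m ∈ Set.Ioo (-1 : ℝ) 1) (x : ℝ) : 0 < gdd m x := by
  have h1 : 0 < 1 + m := by linarith [hm.1]
  have h2 : 0 < 1 - m := by linarith [hm.2]
  have := den_pos m hm x
  unfold gdd
  positivity

lemma gd_top (m : ℝ) (hm : m ∈ Set.Ioo (-1 : ℝ) 1) : Tendsto (gd m) atTop (𝓝 (1 - m)) := by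
  have h1 : 0 < (1 + m) / 2 := by linarith [hm.1]
  have h2 : Tendsto (fun x : ℝ => (1 + m) / 2 * Real.exp (2 * x) + (1 - m) / 2) atTop atTop :=
    tendsto_atTop_add_const_right _ _ ((Real.tendsto_exp_atTop.comp
      (tendsto_id.const_mul_atTop (by norm_num : (0:ℝ) < 2))).const_mul_atTop h1)
  have h3 := (h2.const_div_atTop (1 - m)).const_sub (1 - m)
  rw [sub_zero] at h3
  exact h3

lemma gd_bot (m : ℝ) (hm : m ∈ Set.Ioo (-1 : ℝ) 1) : Tendsto (gd m) atBot (𝓝 (-1 - m)) := by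
  have h1 : 0 < 1 - m := by linarith [hm.2]
  have h2 : Tendsto (fun x : ℝ => (1 + m) / 2 * Real.exp (2 * x) + (1 - m) / 2) atBot
      (𝓝 ((1 + m) / 2 * 0 + (1 - m) / 2)) :=
    ((Real.tendsto_exp_atBot.comp
      (tendsto_id.const_mul_atBot (by norm_num : (0:ℝ) < 2))).const_mul _).add_const _
  have h3 := ((tendsto_const_nhds (x := 1 - m)).div h2 (by simp; linarith)).const_sub (1 - m)
  have e : 1 - m - (1 - m) / ((1 + m) / 2 * 0 + (1 - m) / 2) = -1 - m := by
    rw [mul_zero, zero_add]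
    field_simp
    ring
  rw [e] at h3
  exact h3

lemma hasDerivAt_Mn {n : ℕ} (m : ℝ) (hm : m ∈ Set.Ioo (-1 : ℝ) 1) (h : Fin n → ℝ) (x : ℝ) :
    HasDerivAt (Mn m h) (∑ i, gd m (x * h i) * h i) x := by
  unfold Mn
  refine HasDerivAt.fun_sum fun i _ => ?_
  have h1 : HasDerivAt (fun x : ℝ => x * h i) (h i) x := by
    simpa using (hasDerivAt_id x).mul_const (h i)
  exact HasDerivAt.comp (h₂ := gfun m) x (hasDerivAt_g m hm (x * h i)) h1

lemma deriv_Mn {n : ℕ} (m : ℝ) (hm : m ∈ Set.Ioo (-1 : ℝ) 1) (h : Fin n → ℝ) :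
    deriv (Mn m h) = fun x => ∑ i, gd m (x * h i) * h i :=
  funext fun x => (hasDerivAt_Mn m hm h x).deriv

lemma hasDerivAt_Mn' {n : ℕ} (m : ℝ) (hm : m ∈ Set.Ioo (-1 : ℝ) 1) (h : Fin n → ℝ) (x : ℝ) :
    HasDerivAt (deriv (Mn m h)) (∑ i, gdd m (x * h i) * h i * h i) x := by
  rw [deriv_Mn m hm]
  refine HasDerivAt.fun_sum fun i _ => ?_
  have h1 : HasDerivAt (fun x : ℝ => x * h i) (h i) x := by
    simpa using (hasDerivAt_id x).mul_const (h i)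
  exact ((hasDerivAt_gd m hm (x * h i)).comp x h1).mul_const (h i)

lemma Mn_tendsto {n : ℕ} (m : ℝ) (hm : m ∈ Set.Ioo (-1 : ℝ) 1) (h : Fin n → ℝ) :
    Tendsto (deriv (Mn m h)) atTop (𝓝 (SigmaN m h)) := by
  rw [deriv_Mn m hm, SigmaN, Finset.mul_sum, ← Finset.sum_add_distrib]
  refine tendsto_finsetSum _ fun i _ => ?_
  rcases lt_trichotomy (h i) 0 with hi | hi | hi
  · have := ((gd_bot m hm).comp (tendsto_id.atTop_mul_const_of_neg hi)).mul_const (h i)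
    rw [show -m * h i + |h i| = (-1 - m) * h i by rw [abs_of_neg hi]; ring]
    exact this
  · simp [hi]
  · have := ((gd_top m hm).comp (tendsto_id.atTop_mul_const hi)).mul_const (h i)
    rw [show -m * h i + |h i| = (1 - m) * h i by rw [abs_of_pos hi]; ring]
    exact this

/-- analytical properties of the log-moment generating function `M_n(h,·)`. -/
theorem stmt6 (m : ℝ) (hm : m ∈ Set.Ioo (-1 : ℝ) 1) (n : ℕ) (h : Fin n → ℝ)
    (hne : h ≠ 0) :
    -- continuity and infinite differentiability
    ContDiff ℝ (⊤ : ℕ∞) (Mn m h) ∧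
    -- (1)
    (Mn m h 0 = 0 ∧ deriv (Mn m h) 0 = 0) ∧
    -- (2)
    (∀ lam : ℝ, 0 < deriv (deriv (Mn m h)) lam) ∧
    -- (3)
    deriv (Mn m h) '' (Set.Ioi 0) = Set.Ioo 0 (SigmaN m h) ∧
    -- (4)
    (∃ Lam : ℝ → ℝ,
      ContinuousOn Lam (Set.Ico 0 (SigmaN m h)) ∧
      StrictMonoOn Lam (Set.Ico 0 (SigmaN m h)) ∧
      (∀ a ∈ Set.Ico 0 (SigmaN m h), 0 ≤ Lam a ∧ deriv (Mn m h) (Lam a) = a) ∧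
      Lam 0 = 0 ∧ Lam '' (Set.Ioo 0 (SigmaN m h)) = Set.Ioi 0) := by
  have hdd : ∀ lam : ℝ, 0 < deriv (deriv (Mn m h)) lam := by
    intro x
    rw [(hasDerivAt_Mn' m hm h x).deriv]
    obtain ⟨j, hj⟩ := Function.ne_iff.1 hne
    have hj' : h j ≠ 0 := hj
    refine Finset.sum_pos' (fun i _ => ?_) ⟨j, Finset.mem_univ _, ?_⟩
    · rw [mul_assoc]
      exact mul_nonneg (gdd_pos m hm _).le (mul_self_nonneg _)
    · rw [mul_assoc]
      exact mul_pos (gdd_pos m hm _) (mul_self_pos.2 hj')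
  have h0 : deriv (Mn m h) 0 = 0 := by
    rw [deriv_Mn m hm]
    have : gd m 0 = 0 := by
      simp only [gd, mul_zero, Real.exp_zero]
      ring
    simp [this]
  refine ⟨?_, ⟨?_, h0⟩, hdd, aux_abs _ _ ?_ (strictMono_of_deriv_pos hdd) h0 (Mn_tendsto m hm h)⟩
  · unfold Mn
    refine ContDiff.sum fun i _ => ?_
    rw [gfun_eq_s6 m hm]
    have hd : ContDiff ℝ (⊤ : ℕ∞)
        (fun x : ℝ => (1 + m) / 2 * Real.exp (2 * (x * h i)) + (1 - m) / 2) := by fun_prop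
    have := hd.log (fun x => (den_pos m hm (x * h i)).ne')
    fun_prop
  · have : gfun m 0 = 0 := by
      simp only [gfun, zero_mul, neg_zero, Real.exp_zero]
      rw [show (1 + m) / 2 * 1 + (1 - m) / 2 * 1 = 1 by ring, Real.log_one]
    simp [Mn, this]
  · exact continuous_iff_continuousAt.2 fun x => (hasDerivAt_Mn' m hm h x).continuousAt
end
end

section
/- Fix m ∈ (−1,1), n ∈ ℕ, h ∈ ℝ^n with h ≠ 0, x ∈ ℝ, and C ∈ ℝ. Suppose (Ã, Λ̃, Λ̃ˣ) satisfies the system M*_n(h,Ã) + (1/2)log(2π M''_n(h,Λ̃)) = C, M'_n(h,Λ̃) = Ã, M'_n(h,Λ̃ˣ) = Ã + x, with Ã ∈ (0, Σ_n(h)) and Ã + x ∈ (0, Σ_n(h)). Define J_n(h,a) = e^{−M*_n(h,a)} / ( Λ_n(h,a) · √(2π M''_n(h, Λ_n(h,a))) ). Then √( M''_n(h,Λ̃ˣ)/M''_n(h,Λ̃) ) · Λ̃ˣ · J_n(h, Ã + x) ≤ e^{−C − Λ̃ x}, and √( M''_n(h,Λ̃ˣ)/M''_n(h,Λ̃) )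 · Λ̃ˣ · J_n(h, Ã + x) ≥ e^{−C − Λ̃ˣ x}. -/
open MeasureTheory Real Filter Set
open scoped Topology BigOperators

noncomputable section

/-- `M*_n(h,a) = sup_{λ∈ℝ}(λa − M_n(h,λ))`. -/
def MstarN {n : ℕ} (m : ℝ) (h : Fin n → ℝ) (a : ℝ) : ℝ :=
  ⨆ lam : ℝ, (lam * a - Mn m h lam)

/-- `J_n(h,a) = e^{−M*_n(h,a)} / (Λ_n(h,a) √(2π M''_n(h,Λ_n(h,a))))`. -/
def Jn {n : ℕ} (m : ℝ) (h : Fin n → ℝ) (Lam : ℝ → ℝ) (a : ℝ) : ℝ :=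
  Real.exp (-(MstarN m h a)) /
    (Lam a * Real.sqrt (2 * π * deriv (deriv (Mn m h)) (Lam a)))

theorem aux_den_pos (m : ℝ) (hm : m ∈ Set.Ioo (-1 : ℝ) 1) (t : ℝ) :
    0 < (1 + m) / 2 * Real.exp t + (1 - m) / 2 * Real.exp (-t) := by
  have h1 : 0 < (1 + m) / 2 := by linarith [hm.1]
  have h2 : 0 < (1 - m) / 2 := by linarith [hm.2]
  positivity

theorem aux_gfun (m : ℝ) (hm : m ∈ Set.Ioo (-1 : ℝ) 1) (t : ℝ) :
    gfun m t = -m * t + Real.log ((1 + m) / 2 * Real.exp t + (1 - m) / 2 * Real.exp (-t)) := by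
  have hp := aux_den_pos m hm t
  have e : (1 + m) / 2 * Real.exp (t * (1 - m)) + (1 - m) / 2 * Real.exp (-(t * (1 + m)))
      = Real.exp (-m * t) * ((1 + m) / 2 * Real.exp t + (1 - m) / 2 * Real.exp (-t)) := by
    have e1 : Real.exp (t * (1 - m)) = Real.exp (-m * t) * Real.exp t := by
      rw [← Real.exp_add]; congr 1; ring
    have e2 : Real.exp (-(t * (1 + m))) = Real.exp (-m * t) * Real.exp (-t) := by
      rw [← Real.exp_add]; congr 1; ring
    rw [e1, e2]; ring
  rw [gfun, e, Real.log_mul (Real.exp_pos _).ne' hp.ne', Real.log_exp]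

/-- first derivative of `gfun`. -/
def auxG1 (m t : ℝ) : ℝ :=
  -m + ((1 + m) / 2 * Real.exp t - (1 - m) / 2 * Real.exp (-t)) /
    ((1 + m) / 2 * Real.exp t + (1 - m) / 2 * Real.exp (-t))

/-- second derivative of `gfun`. -/
def auxG2 (m t : ℝ) : ℝ :=
  (1 + m) * (1 - m) / ((1 + m) / 2 * Real.exp t + (1 - m) / 2 * Real.exp (-t)) ^ 2

theorem aux_exp_neg (t : ℝ) : HasDerivAt (fun s : ℝ => Real.exp (-s)) (-Real.exp (-t)) t := by
  have := (hasDerivAt_neg t).exp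
  convert this using 1; ring

theorem aux_hasDeriv_g (m : ℝ) (hm : m ∈ Set.Ioo (-1 : ℝ) 1) (t : ℝ) :
    HasDerivAt (gfun m) (auxG1 m t) t := by
  have e : gfun m = fun t => -m * t +
      Real.log ((1 + m) / 2 * Real.exp t + (1 - m) / 2 * Real.exp (-t)) :=
    funext (aux_gfun m hm)
  rw [e]
  have hD : HasDerivAt (fun s : ℝ => (1 + m) / 2 * Real.exp s + (1 - m) / 2 * Real.exp (-s))
      ((1 + m) / 2 * Real.exp t + (1 - m) / 2 * (-Real.exp (-t))) t :=
    ((Real.hasDerivAt_exp t).const_mul _).add ((aux_exp_neg t).const_mul _)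
  have := ((hasDerivAt_id t).const_mul (-m)).add (hD.log (aux_den_pos m hm t).ne')
  refine this.congr_deriv ?_
  rw [auxG1]; ring

theorem aux_hasDeriv_G1 (m : ℝ) (hm : m ∈ Set.Ioo (-1 : ℝ) 1) (t : ℝ) :
    HasDerivAt (auxG1 m) (auxG2 m t) t := by
  have hD : HasDerivAt (fun s : ℝ => (1 + m) / 2 * Real.exp s + (1 - m) / 2 * Real.exp (-s))
      ((1 + m) / 2 * Real.exp t + (1 - m) / 2 * (-Real.exp (-t))) t :=
    ((Real.hasDerivAt_exp t).const_mul _).add ((aux_exp_neg t).const_mul _)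
  have hN : HasDerivAt (fun s : ℝ => (1 + m) / 2 * Real.exp s - (1 - m) / 2 * Real.exp (-s))
      ((1 + m) / 2 * Real.exp t - (1 - m) / 2 * (-Real.exp (-t))) t :=
    ((Real.hasDerivAt_exp t).const_mul _).sub ((aux_exp_neg t).const_mul _)
  have := (hN.div hD (aux_den_pos m hm t).ne').const_add (-m)
  refine HasDerivAt.congr_deriv (f := auxG1 m) this ?_
  rw [auxG2]
  congr 1
  have e : Real.exp t * Real.exp (-t) = 1 := by rw [← Real.exp_add]; simp
  linear_combination ((1 + m) * (1 - m)) * e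

theorem aux_G2_pos (m : ℝ) (hm : m ∈ Set.Ioo (-1 : ℝ) 1) (t : ℝ) : 0 < auxG2 m t := by
  have hp := aux_den_pos m hm t
  have h1 : 0 < 1 + m := by linarith [hm.1]
  have h2 : 0 < 1 - m := by linarith [hm.2]
  rw [auxG2]; positivity

theorem aux_hasDeriv_M (m : ℝ) (hm : m ∈ Set.Ioo (-1 : ℝ) 1) {n : ℕ} (h : Fin n → ℝ) (t : ℝ) :
    HasDerivAt (Mn m h) (∑ i, auxG1 m (t * h i) * h i) t := by
  have : ∀ i ∈ (Finset.univ : Finset (Fin n)),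
      HasDerivAt (fun s => gfun m (s * h i)) (auxG1 m (t * h i) * h i) t := fun i _ =>
    HasDerivAt.comp (h₂ := gfun m) (h := fun s => s * h i) t (aux_hasDeriv_g m hm (t * h i))
      (hasDerivAt_mul_const (h i))
  exact HasDerivAt.fun_sum this

theorem aux_hasDeriv_M1 (m : ℝ) (hm : m ∈ Set.Ioo (-1 : ℝ) 1) {n : ℕ} (h : Fin n → ℝ) (t : ℝ) :
    HasDerivAt (deriv (Mn m h)) (∑ i, auxG2 m (t * h i) * h i * h i) t := by
  have e : deriv (Mn m h) = fun t => ∑ i, auxG1 m (t * h i) * h i :=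
    funext fun t => (aux_hasDeriv_M m hm h t).deriv
  rw [e]
  have : ∀ i ∈ (Finset.univ : Finset (Fin n)),
      HasDerivAt (fun s => auxG1 m (s * h i) * h i) (auxG2 m (t * h i) * h i * h i) t :=
    fun i _ => (HasDerivAt.comp (h₂ := auxG1 m) (h := fun s => s * h i) t (aux_hasDeriv_G1 m hm (t * h i))
      (hasDerivAt_mul_const (h i))).mul_const (h i)
  exact HasDerivAt.fun_sum this

theorem aux_M2_pos (m : ℝ) (hm : m ∈ Set.Ioo (-1 : ℝ) 1) {n : ℕ} (h : Fin n → ℝ) (hne : h ≠ 0)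
    (t : ℝ) : 0 < deriv (deriv (Mn m h)) t := by
  rw [(aux_hasDeriv_M1 m hm h t).deriv]
  obtain ⟨i, hi⟩ := Function.ne_iff.mp hne
  refine Finset.sum_pos' (fun j _ => ?_) ⟨i, Finset.mem_univ i, ?_⟩
  · rw [mul_assoc]
    exact mul_nonneg (aux_G2_pos m hm _).le (mul_self_nonneg _)
  · rw [mul_assoc]
    exact mul_pos (aux_G2_pos m hm _) (mul_self_pos.mpr hi)

theorem aux_tangent (m : ℝ) (hm : m ∈ Set.Ioo (-1 : ℝ) 1) {n : ℕ} (h : Fin n → ℝ) (hne : h ≠ 0)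
    (s t : ℝ) : Mn m h t + deriv (Mn m h) t * (s - t) ≤ Mn m h s := by
  have hd : Differentiable ℝ (Mn m h) := fun t => (aux_hasDeriv_M m hm h t).differentiableAt
  have hmono : StrictMono (deriv (Mn m h)) := strictMono_of_deriv_pos (aux_M2_pos m hm h hne)
  rcases lt_trichotomy s t with hst | hst | hst
  · obtain ⟨c, hc, hc'⟩ := exists_deriv_eq_slope (Mn m h) hst hd.continuous.continuousOn
      hd.differentiableOn
    have := hmono hc.2
    rw [eq_div_iff (by linarith)] at hc'
    nlinarith
  · subst hst; simp
  · obtain ⟨c, hc, hc'⟩ := exists_deriv_eq_slope (Mn m h) hst hd.continuous.continuousOn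
      hd.differentiableOn
    have := hmono hc.1
    rw [eq_div_iff (by linarith)] at hc'
    nlinarith

theorem aux_star (m : ℝ) (hm : m ∈ Set.Ioo (-1 : ℝ) 1) {n : ℕ} (h : Fin n → ℝ) (hne : h ≠ 0)
    (t a : ℝ) (ha : deriv (Mn m h) t = a) :
    MstarN m h a = t * a - Mn m h t := by
  have hb : ∀ s, s * a - Mn m h s ≤ t * a - Mn m h t := fun s => by
    have := aux_tangent m hm h hne s t
    rw [ha] at this; linarith
  apply le_antisymm
  · exact ciSup_le hb
  · exact le_ciSup (f := fun s => s * a - Mn m h s) ⟨_, by rintro _ ⟨s, rfl⟩; exact hb s⟩ t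

/-- the deterministic core of the sharp large deviation bounds.  If
`(Ã, Λ̃, Λ̃ˣ)` solves the system `M*_n(h,Ã) + ½ log(2π M''_n(h,Λ̃)) = C`, `M'_n(h,Λ̃) = Ã`,
`M'_n(h,Λ̃ˣ) = Ã + x`, then `√(M''(Λ̃ˣ)/M''(Λ̃)) Λ̃ˣ J_n(h,Ã+x)` lies between
`e^{−C−Λ̃ˣx}` and `e^{−C−Λ̃x}`. -/
theorem stmt14 (m : ℝ) (hm : m ∈ Set.Ioo (-1 : ℝ) 1) (n : ℕ) (h : Fin n → ℝ)
    (hne : h ≠ 0) (Lam : ℝ → ℝ)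
    (hLam : ∀ a ∈ Set.Ico 0 (SigmaN m h), 0 ≤ Lam a ∧ deriv (Mn m h) (Lam a) = a)
    (x C Atil Ltil Ltilx : ℝ)
    (hAmem : Atil ∈ Set.Ioo 0 (SigmaN m h))
    (hAxmem : Atil + x ∈ Set.Ioo 0 (SigmaN m h))
    (hsys1 : MstarN m h Atil +
      1/2 * Real.log (2 * π * deriv (deriv (Mn m h)) Ltil) = C)
    (hsys2 : deriv (Mn m h) Ltil = Atil)
    (hsys3 : deriv (Mn m h) Ltilx = Atil + x) :
    Real.sqrt (deriv (deriv (Mn m h)) Ltilx / deriv (deriv (Mn m h)) Ltil) *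
        Ltilx * Jn m h Lam (Atil + x) ≤ Real.exp (-C - Ltil * x) ∧
    Real.exp (-C - Ltilx * x) ≤
      Real.sqrt (deriv (deriv (Mn m h)) Ltilx / deriv (deriv (Mn m h)) Ltil) *
        Ltilx * Jn m h Lam (Atil + x) := by
  have hmono : StrictMono (deriv (Mn m h)) := strictMono_of_deriv_pos (aux_M2_pos m hm h hne)
  have hL : Lam (Atil + x) = Ltilx := hmono.injective
    ((hLam _ ⟨hAxmem.1.le, hAxmem.2⟩).2.trans hsys3.symm)
  have h0 : deriv (Mn m h) 0 = 0 := by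
    rw [(aux_hasDeriv_M m hm h 0).deriv]
    refine Finset.sum_eq_zero fun i _ => ?_
    have : auxG1 m 0 = 0 := by simp [auxG1]; ring
    simp [this]
  have hLpos : 0 < Ltilx := hmono.lt_iff_lt.mp (by rw [h0, hsys3]; exact hAxmem.1)
  have hs1 := aux_star m hm h hne _ _ hsys2
  have hs2 := aux_star m hm h hne _ _ hsys3
  have ht1 := aux_tangent m hm h hne Ltil Ltilx
  have ht2 := aux_tangent m hm h hne Ltilx Ltil
  rw [hsys3] at ht1
  rw [hsys2] at ht2
  have hu := aux_M2_pos m hm h hne Ltil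
  have hv := aux_M2_pos m hm h hne Ltilx
  have key : Real.sqrt (deriv (deriv (Mn m h)) Ltilx / deriv (deriv (Mn m h)) Ltil) *
        Ltilx * Jn m h Lam (Atil + x)
        = Real.exp (-C + MstarN m h Atil - MstarN m h (Atil + x)) := by
    rw [Jn, hL]
    generalize deriv (deriv (Mn m h)) Ltil = u at *
    generalize deriv (deriv (Mn m h)) Ltilx = v at *
    have e : -C + MstarN m h Atil - MstarN m h (Atil + x)
        = -MstarN m h (Atil + x) - Real.log (2 * π * u) / 2 := by rw [← hsys1]; ring
    rw [e, Real.exp_sub, ← Real.log_sqrt (by positivity), Real.exp_log (by positivity),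
      Real.sqrt_div hv.le, Real.sqrt_mul (by positivity) v, Real.sqrt_mul (by positivity) u]
    have := Real.sqrt_pos.mpr hu
    have := Real.sqrt_pos.mpr hv
    field_simp
  rw [key, Real.exp_le_exp, Real.exp_le_exp, hs1, hs2]
  constructor <;> nlinarith
end
end
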